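/- Let 0 < q ≤ 1 and let w be a positive non-increasing function on (0,1) with ∫_0^1 w(t) dt = 1. Then the Lorentz function space L_{w,q}(0,1) is isometric to a subspace of L_q if and only if there exists α ∈ [0,2] such that w(t) = 1 + α/2 − αt for almost every t ∈ (0,1). -/

import Mathlib

/-!
Write `W(d) = ∫_0^d w` and `d_f(r) = λ{|f| > r}`. By the layer-cake formula
(`lorentz_layer_cake`), `‖f‖^q = ∫_0^∞ q r^{q-1} W(d_f(r)) dr`, so everything depends on `W` only.

*Linear weights embed* (`linear_weight_embeds`). If `w(t) = 1 + α/2 - αt` then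
`W(d) = (1 - α/2) d + (α/2) (1 - (1 - d)²)`, and `1 - (1 - d_f)²` is the distribution function of
`max(|f(u)|, |f(v)|)` on the unit square. Hence
`‖f‖^q = (1 - α/2) ∫ |f(u)|^q + (α/2) ∬ max(|f(u)|, |f(v)|)^q`. The first term is an `L_q`-norm. In
the second, `max(|a|, |b|) = |(a+b)/2| + |(a-b)/2|` is an `ℓ_1^2`-norm, and `ℓ_1^2` embeds into
`L_q`, through independent Cauchy variables when `q < 1` (`exists_embedding_l1`).

*Embedding forces linearity* (`linear_of_embeds`). Consider step functions with values `x, y, z` on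
disjoint intervals of lengths `a, b, c`. Their norm is invariant under sign changes of the values,
so averaging an embedding over signs and using `|v|^q = const · ∫_0^∞ (1 - cos vs) s^{-1-q} ds`
exhibits `‖·‖^q` on the positive octant as a superposition of functions
`1 - cos(ux) cos(vy) cos(wz)`. Test it against `S_α'(x) S_β'(y) S_γ'(z)`, where
`S_α(x) = e^{-x} sin(αx)`: this function has integral zero and a nonnegative cosine transform for
`α, β, γ ≥ 0`, so the result is `≤ 0` (`integral_prof3_nonpos`). On the other hand the layer-cake
formula evaluates the result (`integral_prof3_stepDistr`): it is `-q` times the third difference of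
`W` with increments `a, b, c`, times
`∫_0^∞ r^{q-1} S_α(r) S_β(r) S_γ(r) dr` (`triple`). The latter integral takes both signs: for
frequencies `K, K, 2K ± 1` with `K` large it is dominated, by the Riemann–Lebesgue lemma, by
`∓ ¼ ∫_0^∞ r^{q-1} e^{-3r} sin r dr` (`exists_triple_signs`). Hence all third differences of `W`
vanish (`thirdDiff_eq_zero`), so `W` is a quadratic polynomial (`quadratic_of_thirdDiff`), and `w`,
being monotone, is linear. Monotonicity, positivity and the normalization of `w` then give
`α ∈ [0,2]`.
-/

open MeasureTheory Set

/-- The non-increasing rearrangement (on `(0,1)`) of a function `f : ℝ → ℝ`: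
`f^*(t) = inf { s ≥ 0 : λ({u ∈ (0,1) : |f(u)| > s}) ≤ t }`. -/
noncomputable def decRearr (f : ℝ → ℝ) (t : ℝ) : ℝ :=
  sInf {s : ℝ | 0 ≤ s ∧ volume {u ∈ Ioo (0:ℝ) 1 | s < |f u|} ≤ ENNReal.ofReal t}

/-! ### Rearrangements and the layer-cake formula -/

/-- The distribution function of `|f|` on `(0,1)`, as a real number. -/
noncomputable def distr (f : ℝ → ℝ) (s : ℝ) : ℝ :=
  (volume {u ∈ Ioo (0:ℝ) 1 | s < |f u|}).toReal

/-- The primitive `W(d) = ∫_0^d w` of the weight. -/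
noncomputable def primW (w : ℝ → ℝ) (d : ℝ) : ℝ := ∫ t in Ioo (0:ℝ) d, w t

lemma volume_superlevel_le_one (f : ℝ → ℝ) (s : ℝ) :
    volume {u ∈ Ioo (0:ℝ) 1 | s < |f u|} ≤ 1 := by
  calc volume {u ∈ Ioo (0:ℝ) 1 | s < |f u|} ≤ volume (Ioo (0:ℝ) 1) :=
        measure_mono (fun u hu => hu.1)
    _ = 1 := by simp

lemma ofReal_distr (f : ℝ → ℝ) (s : ℝ) :
    ENNReal.ofReal (distr f s) = volume {u ∈ Ioo (0:ℝ) 1 | s < |f u|} :=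
  ENNReal.ofReal_toReal (ne_top_of_le_ne_top ENNReal.one_ne_top (volume_superlevel_le_one f s))

lemma distr_nonneg (f : ℝ → ℝ) (s : ℝ) : 0 ≤ distr f s := ENNReal.toReal_nonneg

lemma distr_le_one (f : ℝ → ℝ) (s : ℝ) : distr f s ≤ 1 :=
  ENNReal.toReal_le_of_le_ofReal zero_le_one (by simpa using volume_superlevel_le_one f s)

lemma measurableSet_superlevel {f : ℝ → ℝ} (hf : Measurable f) (s : ℝ) :
    MeasurableSet {u ∈ Ioo (0:ℝ) 1 | s < |f u|} :=
  measurableSet_Ioo.inter (measurableSet_lt measurable_const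
    (continuous_abs.measurable.comp hf))

/-- For `t > 0` the infimum defining `f^*(t)` runs over a nonempty set, since `|f|` is finite. -/
lemma decRearr_set_nonempty {f : ℝ → ℝ} (hf : Measurable f) {t : ℝ} (ht : 0 < t) :
    {s : ℝ | 0 ≤ s ∧ volume {u ∈ Ioo (0:ℝ) 1 | s < |f u|} ≤ ENNReal.ofReal t}.Nonempty := by
  have hlim := tendsto_measure_iInter_atTop (μ := volume)
    (s := fun n : ℕ => {u ∈ Ioo (0:ℝ) 1 | (n:ℝ) < |f u|})
    (fun n => (measurableSet_superlevel hf n).nullMeasurableSet)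
    (fun m n hmn u hu => ⟨hu.1, lt_of_le_of_lt (by exact_mod_cast hmn) hu.2⟩)
    ⟨0, ne_top_of_le_ne_top ENNReal.one_ne_top (volume_superlevel_le_one f _)⟩
  have hemp : (⋂ n : ℕ, {u ∈ Ioo (0:ℝ) 1 | (n:ℝ) < |f u|}) = ∅ := by
    ext u
    simp only [mem_iInter, mem_ofPred_eq, mem_empty_iff_false, iff_false]
    intro h
    obtain ⟨n, hn⟩ := exists_nat_gt |f u|
    exact absurd (h n).2 (not_lt.2 hn.le)
  rw [hemp, measure_empty] at hlim
  obtain ⟨n, hn⟩ := (hlim.eventually (gt_mem_nhds (ENNReal.ofReal_pos.2 ht))).exists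
  exact ⟨n, Nat.cast_nonneg n, hn.le⟩

lemma decRearr_set_bddBelow (f : ℝ → ℝ) (t : ℝ) :
    BddBelow {s : ℝ | 0 ≤ s ∧ volume {u ∈ Ioo (0:ℝ) 1 | s < |f u|} ≤ ENNReal.ofReal t} :=
  ⟨0, fun _ hs => hs.1⟩

lemma decRearr_nonneg (f : ℝ → ℝ) (t : ℝ) : 0 ≤ decRearr f t :=
  Real.sInf_nonneg (fun _ hs => hs.1)

/-- The rearrangement is the generalized inverse of the distribution function. -/
lemma lt_decRearr_iff {f : ℝ → ℝ} (hf : Measurable f) {t s : ℝ} (ht : 0 < t) (hs : 0 ≤ s) :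
    s < decRearr f t ↔ t < distr f s := by
  have key : t < distr f s ↔ ENNReal.ofReal t < volume {u ∈ Ioo (0:ℝ) 1 | s < |f u|} := by
    rw [← ofReal_distr, ENNReal.ofReal_lt_ofReal_iff_of_nonneg ht.le]
  rw [key]
  constructor
  · intro h
    by_contra hcon
    exact absurd (csInf_le (decRearr_set_bddBelow f t) ⟨hs, not_lt.1 hcon⟩) (not_le.2 h)
  · intro h
    have hU : {u ∈ Ioo (0:ℝ) 1 | s < |f u|}
        = ⋃ n : ℕ, {u ∈ Ioo (0:ℝ) 1 | s + 1 / ((n:ℝ) + 1) < |f u|} := by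
      ext u
      simp only [mem_ofPred_eq, mem_iUnion]
      constructor
      · rintro ⟨hu, hlt⟩
        obtain ⟨n, hn⟩ := exists_nat_one_div_lt (sub_pos.2 hlt)
        exact ⟨n, hu, by linarith⟩
      · rintro ⟨n, hu, hlt⟩
        exact ⟨hu, lt_trans (by have : 0 < 1 / ((n:ℝ) + 1) := Nat.one_div_pos_of_nat
                                linarith) hlt⟩
    have hmono : Monotone fun n : ℕ => {u ∈ Ioo (0:ℝ) 1 | s + 1 / ((n:ℝ) + 1) < |f u|} := by
      intro m n hmn u hu
      refine ⟨hu.1, lt_of_le_of_lt ?_ hu.2⟩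
      have := Nat.one_div_le_one_div (α := ℝ) hmn
      linarith
    rw [hU, hmono.measure_iUnion, lt_iSup_iff] at h
    obtain ⟨n, hn⟩ := h
    have hpos : 0 < 1 / ((n:ℝ) + 1) := Nat.one_div_pos_of_nat
    refine lt_of_lt_of_le (show s < s + 1 / ((n:ℝ) + 1) by linarith) ?_
    refine le_csInf (decRearr_set_nonempty hf ht) (fun s' hs' => ?_)
    by_contra hcon
    refine absurd (hn.trans_le (measure_mono ?_)) (not_lt.2 hs'.2)
    intro u hu
    exact ⟨hu.1, (not_le.1 hcon).trans hu.2⟩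

lemma decRearr_antitoneOn {f : ℝ → ℝ} (hf : Measurable f) :
    AntitoneOn (decRearr f) (Ioo (0:ℝ) 1) := by
  intro t ht t' _ htt'
  refine csInf_le_csInf (decRearr_set_bddBelow f t') (decRearr_set_nonempty hf ht.1) ?_
  exact fun s hs => ⟨hs.1, hs.2.trans (ENNReal.ofReal_le_ofReal htt')⟩

lemma aemeasurable_decRearr {f : ℝ → ℝ} (hf : Measurable f) :
    AEMeasurable (decRearr f) (volume.restrict (Ioo (0:ℝ) 1)) :=
  aemeasurable_restrict_of_antitoneOn measurableSet_Ioo (decRearr_antitoneOn hf)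

/-- Layer-cake formula: `‖f‖^q = ∫_0^∞ q r^{q-1} W(λ{|f| > r}) dr`. -/
lemma lorentz_layer_cake {q : ℝ} (hq0 : 0 < q) {w : ℝ → ℝ}
    (hw_pos : ∀ t ∈ Ioo (0:ℝ) 1, 0 < w t) (hw : IntegrableOn w (Ioo (0:ℝ) 1))
    {f : ℝ → ℝ} (hf : Measurable f) :
    (∫⁻ t in Ioo (0:ℝ) 1, ENNReal.ofReal (decRearr f t ^ q * w t)) =
      ENNReal.ofReal q * ∫⁻ r in Ioi (0:ℝ),
        ENNReal.ofReal (primW w (distr f r)) * ENNReal.ofReal (r ^ (q - 1)) := by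
  set ν := (volume.restrict (Ioo (0:ℝ) 1)).withDensity (fun t => ENNReal.ofReal (w t)) with hν
  have hac : ν ≪ volume.restrict (Ioo (0:ℝ) 1) := withDensity_absolutelyContinuous _ _
  have hm : AEMeasurable (decRearr f) ν := (aemeasurable_decRearr hf).mono_ac hac
  have hwm : AEMeasurable (fun t => ENNReal.ofReal (w t)) (volume.restrict (Ioo (0:ℝ) 1)) :=
    hw.aestronglyMeasurable.aemeasurable.ennreal_ofReal
  have h1 := lintegral_rpow_eq_lintegral_meas_lt_mul ν
    (Filter.Eventually.of_forall (decRearr_nonneg f)) hm hq0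
  have h2 : ∫⁻ t, ENNReal.ofReal (decRearr f t ^ q) ∂ν
      = ∫⁻ t in Ioo (0:ℝ) 1, ENNReal.ofReal (decRearr f t ^ q * w t) := by
    rw [hν, lintegral_withDensity_eq_lintegral_mul₀ hwm
      ((aemeasurable_decRearr hf).pow_const q).ennreal_ofReal]
    refine lintegral_congr fun t => ?_
    rw [Pi.mul_apply, mul_comm, ENNReal.ofReal_mul (Real.rpow_nonneg (decRearr_nonneg f t) q)]
  rw [← h2, h1]
  congr 1
  refine setLIntegral_congr_fun measurableSet_Ioi (fun r hr => ?_)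
  congr 1
  have hd0 := distr_nonneg f r
  have hd1 := distr_le_one f r
  have hsub : Ioo (0:ℝ) (distr f r) ⊆ Ioo 0 1 := Ioo_subset_Ioo_right hd1
  have h3 : ν {t | r < decRearr f t} = ν (Ioo 0 (distr f r)) := by
    refine measure_congr (hac.ae_le ?_)
    filter_upwards [ae_restrict_mem measurableSet_Ioo] with t ht
    refine propext ?_
    show r < decRearr f t ↔ 0 < t ∧ t < distr f r
    rw [lt_decRearr_iff hf ht.1 (le_of_lt hr)]
    exact ⟨fun h => ⟨ht.1, h⟩, fun h => h.2⟩
  rw [h3, hν, withDensity_apply _ measurableSet_Ioo, Measure.restrict_restrict measurableSet_Ioo,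
    inter_eq_left.2 hsub, primW, ofReal_integral_eq_lintegral_ofReal (hw.mono_set hsub)]
  filter_upwards [ae_restrict_mem measurableSet_Ioo] with t ht
  exact (hw_pos t (hsub ht)).le

lemma integral_lorentz_eq_toReal {q : ℝ} {w : ℝ → ℝ}
    (hw_pos : ∀ t ∈ Ioo (0:ℝ) 1, 0 < w t) (hw : IntegrableOn w (Ioo (0:ℝ) 1))
    {f : ℝ → ℝ} (hf : Measurable f) :
    (∫ t in Ioo (0:ℝ) 1, decRearr f t ^ q * w t)
      = (∫⁻ t in Ioo (0:ℝ) 1, ENNReal.ofReal (decRearr f t ^ q * w t)).toReal := by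
  refine integral_eq_lintegral_of_nonneg_ae ?_ ?_
  · filter_upwards [ae_restrict_mem measurableSet_Ioo] with t ht
    exact mul_nonneg (Real.rpow_nonneg (decRearr_nonneg f t) q) (hw_pos t ht).le
  · exact (((aemeasurable_decRearr hf).pow_const q).mul
      hw.aestronglyMeasurable.aemeasurable).aestronglyMeasurable

/-! ### Powers as scale mixtures -/

lemma integrableOn_levy {φ : ℝ → ℝ} {p q : ℝ} (hq0 : 0 < q) (hpq : q < p) (hφ : Measurable φ)
    (h0 : ∀ s, 0 < s → 0 ≤ φ s) (h2 : ∀ s, 0 < s → φ s ≤ 2) (hp : ∀ s, 0 < s → φ s ≤ s ^ p) :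
    IntegrableOn (fun s => φ s * s ^ (-1 - q)) (Ioi 0) := by
  have hm : Measurable (fun s : ℝ => φ s * s ^ (-1 - q)) := hφ.mul (measurable_id.pow_const _)
  rw [← Ioc_union_Ioi_eq_Ioi zero_le_one, integrableOn_union]
  constructor
  · have hi : IntegrableOn (fun s : ℝ => s ^ (p - 1 - q)) (Ioc 0 1) :=
      (intervalIntegrable_iff_integrableOn_Ioc_of_le zero_le_one).1
        (intervalIntegral.intervalIntegrable_rpow' (by linarith))
    refine Integrable.mono' hi hm.aestronglyMeasurable ?_
    filter_upwards [ae_restrict_mem measurableSet_Ioc] with s hs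
    have hs' : 0 < s ^ (-1 - q) := Real.rpow_pos_of_pos hs.1 _
    rw [Real.norm_of_nonneg (mul_nonneg (h0 s hs.1) hs'.le)]
    calc φ s * s ^ (-1 - q) ≤ s ^ p * s ^ (-1 - q) :=
          mul_le_mul_of_nonneg_right (hp s hs.1) hs'.le
      _ = s ^ (p - 1 - q) := by rw [← Real.rpow_add hs.1]; congr 1; ring
  · have hi : IntegrableOn (fun s : ℝ => 2 * s ^ (-1 - q)) (Ioi 1) :=
      (integrableOn_Ioi_rpow_of_lt (by linarith) zero_lt_one).const_mul 2
    refine Integrable.mono' hi hm.aestronglyMeasurable ?_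
    filter_upwards [ae_restrict_mem measurableSet_Ioi] with s hs
    have hs0 : (0:ℝ) < s := zero_lt_one.trans hs
    have hs' : 0 < s ^ (-1 - q) := Real.rpow_pos_of_pos hs0 _
    rw [Real.norm_of_nonneg (mul_nonneg (h0 s hs0) hs'.le)]
    exact mul_le_mul_of_nonneg_right (h2 s hs0) hs'.le

lemma levy_comp_mul (φ : ℝ → ℝ) (q : ℝ) {v s : ℝ} (hv : 0 < v) (hs : 0 < s) :
    φ (v * s) * s ^ (-1 - q) = v ^ (1 + q) * (φ (v * s) * (v * s) ^ (-1 - q)) := by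
  rw [Real.mul_rpow hv.le hs.le]
  have : v ^ (1 + q) * v ^ (-1 - q) = 1 := by
    rw [← Real.rpow_add hv, show (1 + q) + (-1 - q) = 0 by ring, Real.rpow_zero]
  linear_combination (-(φ (v * s) * s ^ (-1 - q))) * this

lemma integrableOn_levy_scale {φ : ℝ → ℝ} {q v : ℝ} (hv : 0 < v)
    (h : IntegrableOn (fun s => φ s * s ^ (-1 - q)) (Ioi 0)) :
    IntegrableOn (fun s => φ (v * s) * s ^ (-1 - q)) (Ioi 0) := by
  have h1 := ((integrableOn_Ioi_comp_mul_left_iff (fun s => φ s * s ^ (-1 - q)) 0 hv).2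
    (by simpa using h)).const_mul (v ^ (1 + q))
  exact IntegrableOn.congr_fun h1 (fun s hs => (levy_comp_mul φ q hv hs).symm) measurableSet_Ioi

/-- Homogeneity: `∫_0^∞ φ(vs) s^{-1-q} ds = v^q ∫_0^∞ φ(s) s^{-1-q} ds`. -/
lemma integral_levy_scale (φ : ℝ → ℝ) (q : ℝ) {v : ℝ} (hv : 0 < v) :
    ∫ s in Ioi (0:ℝ), φ (v * s) * s ^ (-1 - q)
      = v ^ q * ∫ s in Ioi (0:ℝ), φ s * s ^ (-1 - q) := by
  rw [setIntegral_congr_fun measurableSet_Ioi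
    (fun s hs => levy_comp_mul φ q hv hs), integral_const_mul,
    integral_comp_mul_left_Ioi (fun s => φ s * s ^ (-1 - q)) 0 hv, mul_zero, smul_eq_mul,
    ← mul_assoc]
  congr 1
  rw [← Real.rpow_neg_one, ← Real.rpow_add hv]
  congr 1; ring

lemma integral_levy_pos {φ : ℝ → ℝ} {q : ℝ} (h : IntegrableOn (fun s => φ s * s ^ (-1 - q)) (Ioi 0))
    (h0 : ∀ s, 0 < s → 0 ≤ φ s) (h1 : ∀ s ∈ Ioo (0:ℝ) 1, 0 < φ s) :
    0 < ∫ s in Ioi (0:ℝ), φ s * s ^ (-1 - q) := by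
  rw [setIntegral_pos_iff_support_of_nonneg_ae _ h]
  · refine lt_of_lt_of_le ?_ (measure_mono (s := Ioo (0:ℝ) 1) ?_)
    · simp
    · intro s hs
      exact ⟨(mul_pos (h1 s hs) (Real.rpow_pos_of_pos hs.1 _)).ne', hs.1⟩
  · filter_upwards [ae_restrict_mem measurableSet_Ioi] with s hs
    exact mul_nonneg (h0 s hs) (Real.rpow_nonneg (le_of_lt hs) _)

/-- The constant `∫_0^∞ (1 - cos s) s^{-1-q} ds`. -/
noncomputable def cosConst (q : ℝ) : ℝ := ∫ s in Ioi (0:ℝ), (1 - Real.cos s) * s ^ (-1 - q)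

lemma integrableOn_one_sub_cos_one {q : ℝ} (hq0 : 0 < q) (hq1 : q ≤ 1) :
    IntegrableOn (fun s => (1 - Real.cos s) * s ^ (-1 - q)) (Ioi 0) := by
  refine integrableOn_levy (p := 2) hq0 (by linarith) (by fun_prop) ?_ ?_ ?_
  · intro s _; linarith [Real.cos_le_one s]
  · intro s _; linarith [Real.neg_one_le_cos s]
  · intro s _
    have := Real.one_sub_sq_div_two_le_cos (x := s)
    rw [Real.rpow_two]; nlinarith [sq_nonneg s]

lemma cosConst_pos {q : ℝ} (hq0 : 0 < q) (hq1 : q ≤ 1) : 0 < cosConst q := by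
  refine integral_levy_pos (φ := fun s => 1 - Real.cos s) (integrableOn_one_sub_cos_one hq0 hq1)
    (fun s _ => by linarith [Real.cos_le_one s]) (fun s hs => ?_)
  have h1 : Real.cos s ≠ 1 := fun h => hs.1.ne' ((Real.cos_eq_one_iff_of_lt_of_lt
    (by linarith [hs.1, Real.pi_pos]) (by linarith [hs.2, Real.pi_gt_three])).1 h)
  exact sub_pos.2 (lt_of_le_of_ne (Real.cos_le_one s) h1)

lemma integrableOn_one_sub_cos {q : ℝ} (hq0 : 0 < q) (hq1 : q ≤ 1) (v : ℝ) :
    IntegrableOn (fun s => (1 - Real.cos (v * s)) * s ^ (-1 - q)) (Ioi 0) := by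
  rcases eq_or_ne v 0 with rfl | hv
  · simp
  · have := integrableOn_levy_scale (φ := fun s => 1 - Real.cos s) (abs_pos.2 hv)
      (integrableOn_one_sub_cos_one hq0 hq1)
    refine this.congr_fun (fun s hs => ?_) measurableSet_Ioi
    have hs' : |v| * s = |v * s| := by rw [abs_mul, abs_of_pos (show (0:ℝ) < s from hs)]
    simp only [hs', Real.cos_abs]

/-- Up to the factor `cosConst q`, the power `|v|^q` is a mixture of the functions
`1 - cos(vs)`. -/
lemma integral_one_sub_cos {q : ℝ} (hq0 : 0 < q) (v : ℝ) :
    ∫ s in Ioi (0:ℝ), (1 - Real.cos (v * s)) * s ^ (-1 - q) = |v| ^ q * cosConst q := by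
  rcases eq_or_ne v 0 with rfl | hv
  · simp [Real.zero_rpow hq0.ne']
  · rw [cosConst, ← integral_levy_scale (fun s => 1 - Real.cos s) q (abs_pos.2 hv)]
    refine setIntegral_congr_fun measurableSet_Ioi (fun s hs => ?_)
    have hs' : |v| * s = |v * s| := by rw [abs_mul, abs_of_pos (show (0:ℝ) < s from hs)]
    simp only [hs', Real.cos_abs]

/-! ### The plane `ℓ_1^2` inside `L_q` -/

/-- The Laplace density `e^{-2π|x|}`, normalized so that its Fourier transform is the Cauchy
density. -/
noncomputable def laplaceFn (x : ℝ) : ℂ := ((Real.exp (-(2 * Real.pi) * |x|) : ℝ) : ℂ)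

lemma continuous_laplaceFn : Continuous laplaceFn := by
  unfold laplaceFn; fun_prop

lemma exp_smul_laplaceFn_Iic (ξ : ℝ) {x : ℝ} (hx : x ≤ 0) :
    Complex.exp (↑(-2 * Real.pi * x * ξ) * Complex.I) • laplaceFn x
      = Complex.exp ((2 * Real.pi * (1 - ξ * Complex.I)) * x) := by
  rw [laplaceFn, abs_of_nonpos hx, smul_eq_mul, Complex.ofReal_exp, ← Complex.exp_add]
  congr 1; push_cast; ring

lemma exp_smul_laplaceFn_Ioi (ξ : ℝ) {x : ℝ} (hx : 0 < x) :
    Complex.exp (↑(-2 * Real.pi * x * ξ) * Complex.I) • laplaceFn x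
      = Complex.exp ((-(2 * Real.pi) * (1 + ξ * Complex.I)) * x) := by
  rw [laplaceFn, abs_of_pos hx, smul_eq_mul, Complex.ofReal_exp, ← Complex.exp_add]
  congr 1; push_cast; ring

lemma laplace_re_pos (ξ : ℝ) : 0 < ((2 * Real.pi * (1 - ξ * Complex.I) : ℂ)).re := by
  simp [Real.pi_pos]

lemma laplace_re_neg (ξ : ℝ) : ((-(2 * Real.pi) * (1 + ξ * Complex.I) : ℂ)).re < 0 := by
  simp [Real.pi_pos]

lemma integrableOn_laplace_Iic (ξ : ℝ) : IntegrableOn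
    (fun x : ℝ => Complex.exp (↑(-2 * Real.pi * x * ξ) * Complex.I) • laplaceFn x) (Iic 0) :=
  (integrableOn_exp_mul_complex_Iic (laplace_re_pos ξ) 0).congr_fun
    (fun _ hx => (exp_smul_laplaceFn_Iic ξ hx).symm) measurableSet_Iic

lemma integrableOn_laplace_Ioi (ξ : ℝ) : IntegrableOn
    (fun x : ℝ => Complex.exp (↑(-2 * Real.pi * x * ξ) * Complex.I) • laplaceFn x) (Ioi 0) :=
  (integrableOn_exp_mul_complex_Ioi (laplace_re_neg ξ) 0).congr_fun
    (fun _ hx => (exp_smul_laplaceFn_Ioi ξ hx).symm) measurableSet_Ioi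

lemma integrable_laplaceFn : Integrable laplaceFn := by
  have h := (integrableOn_laplace_Iic 0).union (integrableOn_laplace_Ioi 0)
  rw [Iic_union_Ioi, integrableOn_univ] at h
  simpa using h

lemma fourier_laplaceFn (ξ : ℝ) : FourierTransform.fourier laplaceFn ξ
    = ((ProbabilityTheory.cauchyPDFReal 0 1 ξ : ℝ) : ℂ) := by
  rw [Real.fourier_real_eq_integral_exp_smul, ← intervalIntegral.integral_Iic_add_Ioi
      (integrableOn_laplace_Iic ξ) (integrableOn_laplace_Ioi ξ),
    setIntegral_congr_fun measurableSet_Iic (fun x hx => exp_smul_laplaceFn_Iic ξ hx),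
    setIntegral_congr_fun measurableSet_Ioi (fun x hx => exp_smul_laplaceFn_Ioi ξ hx),
    integral_exp_mul_complex_Iic (laplace_re_pos ξ), integral_exp_mul_complex_Ioi (laplace_re_neg ξ),
    ProbabilityTheory.cauchyPDFReal_def]
  have h1 : (1 - ξ * Complex.I : ℂ) ≠ 0 := fun h => by simpa using congrArg Complex.re h
  have h2 : (1 + ξ * Complex.I : ℂ) ≠ 0 := fun h => by simpa using congrArg Complex.re h
  have h3 : (Real.pi : ℂ) ≠ 0 := by exact_mod_cast Real.pi_ne_zero
  have h4 : ((ξ:ℂ) ^ 2 + 1) = (1 - ξ * Complex.I) * (1 + ξ * Complex.I) := by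
    linear_combination ((ξ:ℂ) ^ 2) * Complex.I_sq
  push_cast
  rw [sub_zero, one_pow, h4]
  simp only [mul_zero, Complex.exp_zero]
  field_simp
  ring

/-- The characteristic function of the standard Cauchy law, by Fourier inversion. -/
lemma integral_exp_cauchy (t : ℝ) :
    ∫ x, Complex.exp (↑(t * x) * Complex.I) ∂(ProbabilityTheory.cauchyMeasure 0 1)
      = ((Real.exp (-|t|) : ℝ) : ℂ) := by
  have hF : FourierTransform.fourier laplaceFn
      = fun ξ => ((ProbabilityTheory.cauchyPDFReal 0 1 ξ : ℝ) : ℂ) := funext fourier_laplaceFn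
  have hi : Integrable (FourierTransform.fourier laplaceFn) := by
    rw [hF]; exact (ProbabilityTheory.integrable_cauchyPDFReal 0).ofReal
  have h := congrFun (continuous_laplaceFn.fourierInv_fourier_eq integrable_laplaceFn hi)
    (t / (2 * Real.pi))
  rw [Real.fourierInv_eq', hF] at h
  have hL : laplaceFn (t / (2 * Real.pi)) = ((Real.exp (-|t|) : ℝ) : ℂ) := by
    rw [laplaceFn, abs_div, abs_of_pos Real.two_pi_pos]
    congr 2
    field_simp [Real.pi_ne_zero]
  rw [← hL, ← h, ProbabilityTheory.cauchyMeasure_of_scale_ne_zero 0 one_ne_zero]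
  unfold ProbabilityTheory.cauchyPDF
  rw [integral_withDensity_eq_integral_toReal_smul₀]
  · refine integral_congr_ae (Filter.Eventually.of_forall fun x => ?_)
    simp only
    rw [ENNReal.toReal_ofReal (ProbabilityTheory.cauchyPDF_pos 0 one_ne_zero x).le,
      Complex.real_smul, smul_eq_mul, mul_comm]
    congr 3
    simp
    field_simp [Real.pi_ne_zero]
  · exact (ProbabilityTheory.measurable_cauchyPDFReal 0 1).ennreal_ofReal.aemeasurable
  · exact Filter.Eventually.of_forall fun x => ENNReal.ofReal_lt_top

lemma isProb_cauchy : IsProbabilityMeasure (ProbabilityTheory.cauchyMeasure 0 1) := by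
  infer_instance

/-- `E cos(aX + bY) = e^{-|a|-|b|}` for independent standard Cauchy variables. -/
lemma integral_cos_cauchy_prod (a b : ℝ) :
    ∫ p : ℝ × ℝ, Real.cos (a * p.1 + b * p.2)
      ∂((ProbabilityTheory.cauchyMeasure 0 1).prod (ProbabilityTheory.cauchyMeasure 0 1))
      = Real.exp (-(|a| + |b|)) := by
  have h := integral_prod_mul (μ := ProbabilityTheory.cauchyMeasure 0 1)
    (ν := ProbabilityTheory.cauchyMeasure 0 1)
    (fun x : ℝ => Complex.exp (↑(a * x) * Complex.I)) (fun x : ℝ => Complex.exp (↑(b * x) * Complex.I))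
  rw [integral_exp_cauchy, integral_exp_cauchy] at h
  have hr := congrArg Complex.re h
  rw [← Complex.ofReal_mul, Complex.ofReal_re, ← Real.exp_add] at hr
  have hInt : Integrable (fun p : ℝ × ℝ => Complex.exp (↑(a * p.1) * Complex.I)
      * Complex.exp (↑(b * p.2) * Complex.I))
      ((ProbabilityTheory.cauchyMeasure 0 1).prod (ProbabilityTheory.cauchyMeasure 0 1)) := by
    refine Integrable.of_bound (C := 1) (by fun_prop) (Filter.Eventually.of_forall fun p => ?_)
    rw [norm_mul, Complex.norm_exp_ofReal_mul_I, Complex.norm_exp_ofReal_mul_I, mul_one]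
  have hre := integral_re hInt
  rw [show RCLike.re (∫ p : ℝ × ℝ, _ ∂_) = Complex.re _ from rfl, hr] at hre
  rw [show -(|a| + |b|) = -|a| + -|b| by ring, ← hre]
  refine integral_congr_ae (Filter.Eventually.of_forall fun p => ?_)
  show _ = Complex.re _
  rw [← Complex.exp_add, ← add_mul, ← Complex.ofReal_add, Complex.exp_ofReal_mul_I_re]

/-- `(ℝ², ℓ_1)` embeds isometrically into `L_q`. For `q < 1` the embedding is
`(a, b) ↦ aX + bY` with independent Cauchy variables `X`, `Y`; for `q = 1`, where Cauchy variables
fail to be integrable, `ℓ_1^2` is itself an `L_1`-space. -/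
lemma exists_embedding_l1 {q : ℝ} (hq0 : 0 < q) (hq1 : q ≤ 1) :
    ∃ m : Measure (ℝ × ℝ), SFinite m ∧ ∀ a b : ℝ,
      ∫⁻ p, ENNReal.ofReal (|a * p.1 + b * p.2| ^ q) ∂m = ENNReal.ofReal ((|a| + |b|) ^ q) := by
  rcases eq_or_lt_of_le hq1 with rfl | hq
  · refine ⟨Measure.dirac (1, 0) + Measure.dirac (0, 1), inferInstance, fun a b => ?_⟩
    rw [lintegral_add_measure, lintegral_dirac, lintegral_dirac]
    simp [ENNReal.ofReal_add]
  set γ := ProbabilityTheory.cauchyMeasure 0 1 with hγ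
  have := isProb_cauchy
  set D := ∫ s in Ioi (0:ℝ), (1 - Real.exp (-s)) * s ^ (-1 - q) with hD
  have hDi : IntegrableOn (fun s => (1 - Real.exp (-s)) * s ^ (-1 - q)) (Ioi 0) := by
    refine integrableOn_levy (p := 1) hq0 hq (by fun_prop) ?_ ?_ ?_
    · intro s hs; linarith [Real.exp_le_one_iff.2 (neg_nonpos.2 hs.le)]
    · intro s _; linarith [Real.exp_pos (-s)]
    · intro s _; rw [Real.rpow_one]; linarith [Real.add_one_le_exp (-s)]
  have hDpos : 0 < D := by
    refine integral_levy_pos (φ := fun s => 1 - Real.exp (-s)) hDi ?_ ?_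
    · intro s hs; linarith [Real.exp_le_one_iff.2 (neg_nonpos.2 hs.le)]
    · intro s hs; linarith [Real.exp_lt_one_iff.2 (neg_lt_zero.2 hs.1)]
  have hC := cosConst_pos hq0 hq1
  refine ⟨ENNReal.ofReal (cosConst q / D) • γ.prod γ, inferInstance, fun a b => ?_⟩
  rw [lintegral_smul_measure, smul_eq_mul]
  have hpow : ∀ v : ℝ, ENNReal.ofReal (|v| ^ q) = ENNReal.ofReal (cosConst q)⁻¹ *
      ∫⁻ s in Ioi (0:ℝ), ENNReal.ofReal ((1 - Real.cos (v * s)) * s ^ (-1 - q)) := by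
    intro v
    rw [← ofReal_integral_eq_lintegral_ofReal (integrableOn_one_sub_cos hq0 hq1 v),
      integral_one_sub_cos hq0, ← ENNReal.ofReal_mul (inv_nonneg.2 hC.le)]
    · congr 1; field_simp
    · filter_upwards [ae_restrict_mem measurableSet_Ioi] with s hs
      exact mul_nonneg (by linarith [Real.cos_le_one (v * s)]) (Real.rpow_nonneg (le_of_lt hs) _)
  simp_rw [hpow]
  rw [lintegral_const_mul' _ _ ENNReal.ofReal_ne_top, lintegral_lintegral_swap (by
    refine Measurable.aemeasurable ?_
    refine Measurable.ennreal_ofReal ?_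
    fun_prop)]
  have hinner : ∀ s ∈ Ioi (0:ℝ), ∫⁻ p : ℝ × ℝ, ENNReal.ofReal
      ((1 - Real.cos ((a * p.1 + b * p.2) * s)) * s ^ (-1 - q)) ∂(γ.prod γ)
      = ENNReal.ofReal ((1 - Real.exp (-((|a| + |b|) * s))) * s ^ (-1 - q)) := by
    intro s hs
    have hs0 : (0:ℝ) < s := hs
    have hci : Integrable (fun p : ℝ × ℝ => Real.cos ((a * p.1 + b * p.2) * s)) (γ.prod γ) :=
      Integrable.of_bound (C := 1) (by fun_prop) (Filter.Eventually.of_forall fun p => by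
        simpa using Real.abs_cos_le_one _)
    have hi : Integrable (fun p : ℝ × ℝ =>
        (1 - Real.cos ((a * p.1 + b * p.2) * s)) * s ^ (-1 - q)) (γ.prod γ) :=
      ((integrable_const 1).sub hci).mul_const _
    rw [← ofReal_integral_eq_lintegral_ofReal hi]
    · rw [integral_mul_const, integral_sub (integrable_const _) hci]
      have := integral_cos_cauchy_prod (a * s) (b * s)
      rw [abs_mul, abs_mul, abs_of_pos hs0, ← add_mul] at this
      rw [← this]
      simp only [integral_const, probReal_univ, smul_eq_mul, mul_one]
      have hcg : ∀ p : ℝ × ℝ, Real.cos (a * s * p.1 + b * s * p.2)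
          = Real.cos ((a * p.1 + b * p.2) * s) := fun p => by congr 1; ring
      simp_rw [hcg]
      rfl
    · exact Filter.Eventually.of_forall fun p =>
        mul_nonneg (by linarith [Real.cos_le_one ((a * p.1 + b * p.2) * s)])
          (Real.rpow_nonneg hs0.le _)
  rw [setLIntegral_congr_fun measurableSet_Ioi hinner]
  rcases eq_or_lt_of_le (add_nonneg (abs_nonneg a) (abs_nonneg b)) with h0 | hpos
  · simp [← h0, Real.zero_rpow hq0.ne']
  · rw [← ofReal_integral_eq_lintegral_ofReal
      (integrableOn_levy_scale (φ := fun s => 1 - Real.exp (-s)) hpos hDi),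
      integral_levy_scale (fun s => 1 - Real.exp (-s)) q hpos, ← hD,
      ← ENNReal.ofReal_mul (inv_nonneg.2 hC.le), ← ENNReal.ofReal_mul (by positivity)]
    · congr 1; field_simp
    · filter_upwards [ae_restrict_mem measurableSet_Ioi] with s hs
      have hs0 : (0:ℝ) < s := hs
      exact mul_nonneg (by
        linarith [Real.exp_le_one_iff.2 (neg_nonpos.2 (mul_pos hpos hs0).le)])
          (Real.rpow_nonneg hs0.le _)

lemma max_eq_abs_add_abs (a b : ℝ) : max |a| |b| = |(a + b) / 2| + |(a - b) / 2| := by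
  rw [abs_div, abs_div, abs_two]
  rcases le_total 0 a with ha | ha <;> rcases le_total 0 b with hb | hb <;>
  rcases le_total 0 (a + b) with h1 | h1 <;> rcases le_total 0 (a - b) with h2 | h2 <;>
  simp only [abs_of_nonneg, abs_of_nonpos, ha, hb, h1, h2] <;>
  (apply le_antisymm
   · apply max_le <;> linarith
   · first
     | exact le_max_of_le_left (by linarith)
     | exact le_max_of_le_right (by linarith))

/-! ### Linear weights give subspaces of `L_q` -/

lemma primW_linear {w : ℝ → ℝ} {α d : ℝ}
    (hw : ∀ᵐ t ∂(volume.restrict (Ioo (0:ℝ) 1)), w t = 1 + α / 2 - α * t)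
    (hd0 : 0 ≤ d) (hd1 : d ≤ 1) :
    primW w d = (1 - α / 2) * d + α / 2 * (1 - (1 - d) ^ 2) := by
  have hsub : Ioo (0:ℝ) d ⊆ Ioo 0 1 := Ioo_subset_Ioo_right hd1
  rw [primW, integral_congr_ae (ae_restrict_of_ae_restrict_of_subset hsub hw),
    ← integral_Ioc_eq_integral_Ioo, ← intervalIntegral.integral_of_le hd0]
  rw [intervalIntegral.integral_sub (by simp) (by
    exact (continuous_const.mul continuous_id).intervalIntegrable _ _)]
  rw [intervalIntegral.integral_const_mul, integral_id]
  simp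
  ring

lemma lam_superlevel {f : ℝ → ℝ} (hf : Measurable f) (r : ℝ) :
    (volume.restrict (Ioo (0:ℝ) 1)) {u | r < |f u|} = ENNReal.ofReal (distr f r) := by
  have hS : MeasurableSet {u : ℝ | r < |f u|} := measurableSet_lt measurable_const
    (continuous_abs.measurable.comp hf)
  rw [ofReal_distr, Measure.restrict_apply hS, inter_comm]
  rfl

lemma isProb_lam : IsProbabilityMeasure (volume.restrict (Ioo (0:ℝ) 1)) := ⟨by simp⟩

/-- If `U`, `V` are independent and uniform on `(0,1)`, then
`P(max(|f(U)|,|f(V)|) > r) = 1 - (1 - λ{|f| > r})²`. -/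
lemma lam_prod_max {f : ℝ → ℝ} (hf : Measurable f) (r : ℝ) :
    ((volume.restrict (Ioo (0:ℝ) 1)).prod (volume.restrict (Ioo (0:ℝ) 1)))
      {p | r < max |f p.1| |f p.2|} = ENNReal.ofReal (1 - (1 - distr f r) ^ 2) := by
  have := isProb_lam
  set lam := volume.restrict (Ioo (0:ℝ) 1)
  have hS : MeasurableSet {u : ℝ | r < |f u|} := measurableSet_lt measurable_const
    (continuous_abs.measurable.comp hf)
  have h1 : {p : ℝ × ℝ | r < max |f p.1| |f p.2|} = ({u | r < |f u|}ᶜ ×ˢ {u | r < |f u|}ᶜ)ᶜ := by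
    ext p
    simp only [mem_ofPred_eq, lt_max_iff, mem_compl_iff, mem_prod]
    tauto
  have h2 : lam {u | r < |f u|}ᶜ = ENNReal.ofReal (1 - distr f r) := by
    rw [prob_compl_eq_one_sub hS, lam_superlevel hf, ← ENNReal.ofReal_one,
      ENNReal.ofReal_sub _ (distr_nonneg f r)]
  have h3 : 0 ≤ 1 - distr f r := sub_nonneg.2 (distr_le_one f r)
  rw [h1, prob_compl_eq_one_sub (hS.compl.prod hS.compl), Measure.prod_prod, h2,
    ← ENNReal.ofReal_mul h3, ← ENNReal.ofReal_one, ← ENNReal.ofReal_sub _ (mul_nonneg h3 h3), sq]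

/-- The embedding realizes
`‖f‖^q = (1 - α/2) ∫ |f(u)|^q + (α/2) ∬ max(|f(u)|, |f(v)|)^q`. -/
lemma linear_weight_embeds {q : ℝ} (hq0 : 0 < q) (hq1 : q ≤ 1) {w : ℝ → ℝ}
    (hw_pos : ∀ t ∈ Ioo (0:ℝ) 1, 0 < w t) (hw : IntegrableOn w (Ioo (0:ℝ) 1))
    {α : ℝ} (hα : α ∈ Icc (0:ℝ) 2)
    (hlin : ∀ᵐ t ∂(volume.restrict (Ioo (0:ℝ) 1)), w t = 1 + α / 2 - α * t) :
    ∃ (Ω : Type) (_ : MeasurableSpace Ω) (μ : Measure Ω)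
        (T : (ℝ → ℝ) →ₗ[ℝ] (Ω → ℝ)),
      ∀ f : ℝ → ℝ, Measurable f →
        (∫⁻ t in Ioo (0:ℝ) 1, ENNReal.ofReal (decRearr f t ^ q * w t)) < ⊤ →
        (∫ ω, |T f ω| ^ q ∂μ) = ∫ t in Ioo (0:ℝ) 1, decRearr f t ^ q * w t := by
  have := isProb_lam
  obtain ⟨m, hm, hemb⟩ := exists_embedding_l1 hq0 hq1
  have hα2 : 0 ≤ 1 - α / 2 := by linarith [hα.2]
  have hα0 : 0 ≤ α / 2 := by linarith [hα.1]
  set lam := volume.restrict (Ioo (0:ℝ) 1) with hlam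
  set m' : Measure (ℝ × ℝ) := ENNReal.ofReal (1 - α / 2) • Measure.dirac (1, 1)
    + ENNReal.ofReal (α / 2) • m with hmix
  -- On the atom `(1, 1)` the operator is `f ↦ f(u)`; against `m` it produces `max(|f(u)|,|f(v)|)`.
  refine ⟨(ℝ × ℝ) × (ℝ × ℝ), inferInstance, (lam.prod lam).prod m',
    { toFun := fun f ω => (f ω.1.1 + f ω.1.2) / 2 * ω.2.1 + (f ω.1.1 - f ω.1.2) / 2 * ω.2.2
      map_add' := fun f g => by ext ω; simp only [Pi.add_apply]; ring
      map_smul' := fun c f => by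
        ext ω; simp only [Pi.smul_apply, smul_eq_mul, RingHom.id_apply]; ring }, ?_⟩
  intro f hf _
  simp only [LinearMap.coe_mk, AddHom.coe_mk]
  have hTm : Measurable fun ω : (ℝ × ℝ) × (ℝ × ℝ) =>
      |(f ω.1.1 + f ω.1.2) / 2 * ω.2.1 + (f ω.1.1 - f ω.1.2) / 2 * ω.2.2| ^ q := by
    fun_prop
  rw [integral_eq_lintegral_of_nonneg_ae
      (Filter.Eventually.of_forall fun ω => Real.rpow_nonneg (abs_nonneg _) q)
      hTm.aestronglyMeasurable,
    integral_lorentz_eq_toReal hw_pos hw hf]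
  congr 1
  rw [lorentz_layer_cake hq0 hw_pos hw hf, lintegral_prod _ hTm.ennreal_ofReal.aemeasurable]
  have hin : ∀ p : ℝ × ℝ, ∫⁻ y : ℝ × ℝ, ENNReal.ofReal
      (|(f p.1 + f p.2) / 2 * y.1 + (f p.1 - f p.2) / 2 * y.2| ^ q) ∂m'
      = ENNReal.ofReal (1 - α / 2) * ENNReal.ofReal (|f p.1| ^ q)
        + ENNReal.ofReal (α / 2) * ENNReal.ofReal ((max |f p.1| |f p.2|) ^ q) := by
    intro p
    rw [hmix, lintegral_add_measure, lintegral_smul_measure, lintegral_smul_measure, hemb,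
      lintegral_dirac, max_eq_abs_add_abs]
    simp only [smul_eq_mul]
    congr 5
    ring
  simp only [hin]
  have hmax : Measurable fun p : ℝ × ℝ => max |f p.1| |f p.2| := by fun_prop
  have hfst : Measurable fun p : ℝ × ℝ => |f p.1| := by fun_prop
  have hdm : Measurable (distr f) := by
    refine Antitone.measurable fun s s' hss => ?_
    rw [← ENNReal.ofReal_le_ofReal_iff (distr_nonneg f s), ofReal_distr, ofReal_distr]
    exact measure_mono fun u hu => ⟨hu.1, lt_of_le_of_lt hss hu.2⟩
  rw [lintegral_add_left (((hfst.pow_const q).ennreal_ofReal).const_mul _),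
    lintegral_const_mul' _ _ ENNReal.ofReal_ne_top, lintegral_const_mul' _ _ ENNReal.ofReal_ne_top,
    lintegral_rpow_eq_lintegral_meas_lt_mul _ (Filter.Eventually.of_forall fun p => abs_nonneg _)
      hfst.aemeasurable hq0,
    lintegral_rpow_eq_lintegral_meas_lt_mul _
      (Filter.Eventually.of_forall fun p => le_max_of_le_left (abs_nonneg _))
      hmax.aemeasurable hq0]
  have hmx : ∀ r, (lam.prod lam) {p : ℝ × ℝ | r < max |f p.1| |f p.2|}
      = ENNReal.ofReal (1 - (1 - distr f r) ^ 2) := lam_prod_max hf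
  simp only [hmx]
  have hfst' : ∀ r, (lam.prod lam) {p : ℝ × ℝ | r < |f p.1|} = ENNReal.ofReal (distr f r) := by
    intro r
    have : {p : ℝ × ℝ | r < |f p.1|} = {u | r < |f u|} ×ˢ univ := by ext p; simp
    rw [this, Measure.prod_prod, measure_univ, mul_one, lam_superlevel hf]
  simp only [hfst']
  rw [mul_left_comm, mul_left_comm (ENNReal.ofReal (α / 2)), ← mul_add]
  congr 1
  rw [← lintegral_const_mul' _ _ ENNReal.ofReal_ne_top,
    ← lintegral_const_mul' _ _ ENNReal.ofReal_ne_top, ← lintegral_add_left (by fun_prop)]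
  refine lintegral_congr fun r => ?_
  have h3 := distr_nonneg f r
  have h4 := distr_le_one f r
  have h5 : 0 ≤ 1 - (1 - distr f r) ^ 2 := by nlinarith
  rw [primW_linear hlin h3 h4, ENNReal.ofReal_add (mul_nonneg hα2 h3) (mul_nonneg hα0 h5),
    ENNReal.ofReal_mul hα2, ENNReal.ofReal_mul hα0, add_mul, mul_assoc, mul_assoc]

/-! ### Test profiles on the half-line -/

lemma integrableOn_exp_mul_cexp (k : ℝ) :
    IntegrableOn (fun x : ℝ => Complex.exp ((-1 + k * Complex.I) * x)) (Ioi 0) :=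
  integrableOn_exp_mul_complex_Ioi (by simp) 0

lemma cexp_re (k x : ℝ) :
    (Complex.exp ((-1 + k * Complex.I) * x)).re = Real.exp (-x) * Real.cos (k * x) := by
  rw [Complex.exp_re]; simp

lemma cexp_im (k x : ℝ) :
    (Complex.exp ((-1 + k * Complex.I) * x)).im = Real.exp (-x) * Real.sin (k * x) := by
  rw [Complex.exp_im]; simp

lemma integral_exp_mul_cexp (k : ℝ) :
    ∫ x in Ioi (0:ℝ), Complex.exp ((-1 + k * Complex.I) * x)
      = (((1 + k ^ 2)⁻¹ : ℝ) : ℂ) + ((k / (1 + k ^ 2) : ℝ) : ℂ) * Complex.I := by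
  rw [integral_exp_mul_complex_Ioi (by simp)]
  have h1 : (-1 + k * Complex.I : ℂ) ≠ 0 := fun h => by simpa using congrArg Complex.re h
  have h2 : (1 + (k:ℂ) ^ 2) ≠ 0 := by
    have : (1 + k ^ 2 : ℝ) ≠ 0 := by positivity
    exact_mod_cast this
  push_cast
  simp only [mul_zero, Complex.exp_zero]
  field_simp
  linear_combination (-(k:ℂ) ^ 2) * Complex.I_sq

lemma integrableOn_exp_cos (k : ℝ) :
    IntegrableOn (fun x => Real.exp (-x) * Real.cos (k * x)) (Ioi 0) := by
  have h := Integrable.re (integrableOn_exp_mul_cexp k)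
  exact h.congr (Filter.Eventually.of_forall fun x => cexp_re k x)

lemma integrableOn_exp_sin (k : ℝ) :
    IntegrableOn (fun x => Real.exp (-x) * Real.sin (k * x)) (Ioi 0) := by
  have h := Integrable.im (integrableOn_exp_mul_cexp k)
  exact h.congr (Filter.Eventually.of_forall fun x => cexp_im k x)

lemma integral_exp_cos (k : ℝ) :
    ∫ x in Ioi (0:ℝ), Real.exp (-x) * Real.cos (k * x) = (1 + k ^ 2)⁻¹ := by
  have h := integral_re (integrableOn_exp_mul_cexp k)
  rw [integral_exp_mul_cexp] at h
  rw [← integral_congr_ae (Filter.Eventually.of_forall fun x => cexp_re k x)]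
  refine h.trans ?_
  simp only [RCLike.re_eq_complex_re]
  simp [-Complex.ofReal_inv, -Complex.ofReal_div]

lemma integral_exp_sin (k : ℝ) :
    ∫ x in Ioi (0:ℝ), Real.exp (-x) * Real.sin (k * x) = k / (1 + k ^ 2) := by
  have h := integral_im (integrableOn_exp_mul_cexp k)
  rw [integral_exp_mul_cexp] at h
  rw [← integral_congr_ae (Filter.Eventually.of_forall fun x => cexp_im k x)]
  refine h.trans ?_
  simp only [RCLike.im_eq_complex_im]
  simp [-Complex.ofReal_inv, -Complex.ofReal_div]

/-- The test profile `A_a = S_a'` with `S_a(x) = e^{-x} sin(ax)`. For `a ≥ 0` its even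
extension to the line is positive definite; it has integral zero. -/
noncomputable def prof (a x : ℝ) : ℝ := (a * Real.cos (a * x) - Real.sin (a * x)) * Real.exp (-x)

lemma continuous_prof (a : ℝ) : Continuous (prof a) := by unfold prof; fun_prop

lemma prof_mul_cos (a ξ x : ℝ) : prof a x * Real.cos (ξ * x) =
    a / 2 * (Real.exp (-x) * Real.cos ((a - ξ) * x))
      + a / 2 * (Real.exp (-x) * Real.cos ((a + ξ) * x))
      - 1 / 2 * (Real.exp (-x) * Real.sin ((a + ξ) * x))
      - 1 / 2 * (Real.exp (-x) * Real.sin ((a - ξ) * x)) := by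
  rw [prof, sub_mul a, add_mul a, Real.cos_sub, Real.cos_add, Real.sin_sub, Real.sin_add]
  ring

lemma integrableOn_prof_mul_cos (a ξ : ℝ) :
    IntegrableOn (fun x => prof a x * Real.cos (ξ * x)) (Ioi 0) := by
  simp_rw [prof_mul_cos]
  exact ((((integrableOn_exp_cos _).const_mul _).add ((integrableOn_exp_cos _).const_mul _)).sub
    ((integrableOn_exp_sin _).const_mul _)).sub ((integrableOn_exp_sin _).const_mul _)

/-- The cosine transform of the profile. -/
lemma integral_prof_mul_cos (a ξ : ℝ) :
    ∫ x in Ioi (0:ℝ), prof a x * Real.cos (ξ * x)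
      = ξ / 2 * ((1 + (a - ξ) ^ 2)⁻¹ - (1 + (a + ξ) ^ 2)⁻¹) := by
  have h1 := (integrableOn_exp_cos (a - ξ)).const_mul (a / 2)
  have h2 := (integrableOn_exp_cos (a + ξ)).const_mul (a / 2)
  have h3 := (integrableOn_exp_sin (a + ξ)).const_mul (1 / 2)
  have h4 := (integrableOn_exp_sin (a - ξ)).const_mul (1 / 2)
  simp_rw [prof_mul_cos]
  refine (integral_sub ((h1.add h2).sub h3) h4).trans ?_
  rw [integral_sub' (h1.add h2) h3, integral_add' h1 h2]
  simp only [integral_const_mul, integral_exp_cos, integral_exp_sin]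
  have h5 : (1 + (a - ξ) ^ 2) ≠ 0 := by positivity
  have h6 : (1 + (a + ξ) ^ 2) ≠ 0 := by positivity
  field_simp
  ring

lemma integral_prof_mul_cos_nonneg {a ξ : ℝ} (ha : 0 ≤ a) (hξ : 0 ≤ ξ) :
    0 ≤ ∫ x in Ioi (0:ℝ), prof a x * Real.cos (ξ * x) := by
  rw [integral_prof_mul_cos]
  refine mul_nonneg (by linarith) (sub_nonneg.2 ?_)
  refine inv_anti₀ (by positivity) ?_
  nlinarith [mul_nonneg ha hξ]

lemma integrableOn_prof (a : ℝ) : IntegrableOn (prof a) (Ioi 0) := by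
  simpa using integrableOn_prof_mul_cos a 0

lemma integral_prof (a : ℝ) : ∫ x in Ioi (0:ℝ), prof a x = 0 := by
  simpa using integral_prof_mul_cos a 0

lemma integral_prof_Ioc (a : ℝ) {r : ℝ} (hr : 0 ≤ r) :
    ∫ x in Ioc (0:ℝ) r, prof a x = Real.sin (a * r) * Real.exp (-r) := by
  rw [← intervalIntegral.integral_of_le hr,
    intervalIntegral.integral_eq_sub_of_hasDerivAt
      (f := fun x => Real.sin (a * x) * Real.exp (-x)) ?_
      ((continuous_prof a).intervalIntegrable _ _)]
  · simp
  · intro x _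
    have h1 : HasDerivAt (fun x => Real.sin (a * x)) (Real.cos (a * x) * (a * 1)) x :=
      ((hasDerivAt_id x).const_mul a).sin
    have h2 : HasDerivAt (fun x => Real.exp (-x)) (Real.exp (-x) * (-1)) x :=
      ((hasDerivAt_id x).neg).exp
    have h3 : prof a x = Real.cos (a * x) * (a * 1) * Real.exp (-x)
        + Real.sin (a * x) * (Real.exp (-x) * (-1)) := by unfold prof; ring
    rw [h3]
    exact h1.mul h2

lemma integrableOn_prof_mul_one_add (a : ℝ) :
    IntegrableOn (fun x => prof a x * (1 + x)) (Ioi 0) := by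
  have h1 : IntegrableOn (fun x : ℝ => Real.exp (-x)) (Ioi 0) := integrableOn_exp_neg_Ioi 0
  have h2 : IntegrableOn (fun x : ℝ => Real.exp (-x) * x ^ ((2:ℝ) - 1)) (Ioi 0) :=
    Real.GammaIntegral_convergent zero_lt_two
  have h3 : IntegrableOn (fun x : ℝ => (|a| + 1) * (Real.exp (-x) + Real.exp (-x) * x ^ ((2:ℝ) - 1)))
    (Ioi 0) := (h1.add h2).const_mul _
  refine Integrable.mono' h3
    ((continuous_prof a).mul (by fun_prop)).aestronglyMeasurable ?_
  filter_upwards [ae_restrict_mem measurableSet_Ioi] with x hx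
  have hx0 : (0:ℝ) < x := hx
  rw [show (2:ℝ) - 1 = 1 by norm_num, Real.rpow_one, prof, norm_mul, norm_mul, Real.norm_eq_abs,
    Real.norm_of_nonneg (Real.exp_pos _).le, Real.norm_of_nonneg (by linarith : 0 ≤ 1 + x)]
  have h4 : |a * Real.cos (a * x) - Real.sin (a * x)| ≤ |a| + 1 := by
    refine (abs_sub _ _).trans (add_le_add ?_ (Real.abs_sin_le_one _))
    rw [abs_mul]
    exact mul_le_of_le_one_right (abs_nonneg a) (Real.abs_cos_le_one _)
  calc _ ≤ (|a| + 1) * Real.exp (-x) * (1 + x) := by gcongr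
    _ = _ := by ring

/-! ### Oscillatory integrals of both signs -/

/-- The sine transform of `r^{q-1} e^{-3r}`. -/
noncomputable def sineTr (q k : ℝ) : ℝ :=
  ∫ r in Ioi (0:ℝ), r ^ (q - 1) * Real.exp (-(3 * r)) * Real.sin (k * r)

lemma integrableOn_gammaWeight {q : ℝ} (hq0 : 0 < q) :
    IntegrableOn (fun r : ℝ => r ^ (q - 1) * Real.exp (-(3 * r))) (Ioi 0) := by
  have := integrableOn_rpow_mul_exp_neg_mul_rpow (p := 1) (s := q - 1) (b := 3) (by linarith)
    one_pos (by norm_num)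
  simpa using this

lemma integrableOn_sineTr {q : ℝ} (hq0 : 0 < q) (k : ℝ) :
    IntegrableOn (fun r : ℝ => r ^ (q - 1) * Real.exp (-(3 * r)) * Real.sin (k * r)) (Ioi 0) := by
  refine Integrable.mul_bdd (c := 1) (integrableOn_gammaWeight hq0) (by fun_prop) ?_
  exact Filter.Eventually.of_forall fun r => by simpa using Real.abs_sin_le_one _

lemma sineTr_neg (q k : ℝ) : sineTr q (-k) = - sineTr q k := by
  simp [sineTr, integral_neg]

/-- Riemann–Lebesgue. -/
lemma tendsto_sineTr {q : ℝ} (hq0 : 0 < q) :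
    Filter.Tendsto (sineTr q) Filter.atTop (nhds 0) := by
  set G : ℝ → ℂ := (Ioi (0:ℝ)).indicator fun r => ((r ^ (q - 1) * Real.exp (-(3 * r)) : ℝ) : ℂ)
    with hG
  have h := Real.zero_at_infty_fourier G
  have h1 : Filter.Tendsto (fun k : ℝ => k / (2 * Real.pi)) Filter.atTop (Filter.cocompact ℝ) :=
    (Filter.tendsto_id.atTop_div_const Real.two_pi_pos).mono_right atTop_le_cocompact
  have h2 := ((Complex.continuous_im.tendsto _).comp (h.comp h1)).neg
  rw [Complex.zero_im, neg_zero] at h2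
  refine h2.congr fun k => ?_
  simp only [Function.comp]
  rw [Real.fourier_real_eq_integral_exp_smul]
  have h3 : ∀ v : ℝ, Complex.exp (↑(-2 * Real.pi * v * (k / (2 * Real.pi))) * Complex.I) • G v
      = (Ioi (0:ℝ)).indicator (fun r => Complex.exp (↑(-(k * r)) * Complex.I) *
        ((r ^ (q - 1) * Real.exp (-(3 * r)) : ℝ) : ℂ)) v := by
    intro v
    have : -2 * Real.pi * v * (k / (2 * Real.pi)) = -(k * v) := by
      field_simp [Real.pi_ne_zero]
    rw [this, hG]
    by_cases hv : v ∈ Ioi (0:ℝ)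
    · simp only [indicator_of_mem hv, smul_eq_mul]
    · simp only [indicator_of_notMem hv, smul_zero]
  simp_rw [h3]
  rw [integral_indicator measurableSet_Ioi]
  have h4 : IntegrableOn (fun r : ℝ => Complex.exp (↑(-(k * r)) * Complex.I) *
      ((r ^ (q - 1) * Real.exp (-(3 * r)) : ℝ) : ℂ)) (Ioi 0) := by
    refine Integrable.bdd_mul (c := 1) (Integrable.ofReal (integrableOn_gammaWeight hq0))
      (by fun_prop) ?_
    exact Filter.Eventually.of_forall fun r => by rw [Complex.norm_exp_ofReal_mul_I]
  have h5 := integral_im h4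
  rw [show (∫ r in Ioi (0:ℝ), Complex.exp (↑(-(k * r)) * Complex.I) *
      ((r ^ (q - 1) * Real.exp (-(3 * r)) : ℝ) : ℂ)).im = _ from h5.symm, ← integral_neg, sineTr]
  refine integral_congr_ae (Filter.Eventually.of_forall fun r => ?_)
  show - Complex.im _ = _
  rw [Complex.im_mul_ofReal, Complex.exp_ofReal_mul_I_im, Real.sin_neg]
  ring

lemma one_sub_cos_le {r : ℝ} (hr : 0 ≤ r) : 1 - Real.cos r ≤ r := by
  have h1 := Real.one_sub_sq_div_two_le_cos (x := r)
  have h2 := Real.neg_one_le_cos r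
  by_cases h : r ≤ 2 <;> nlinarith

/-- Integrating by parts against `1 - cos`, positivity follows from the monotonicity of
`r^{q-1} e^{-3r}`. -/
lemma sineTr_one_pos {q : ℝ} (hq0 : 0 < q) (hq1 : q ≤ 1) : 0 < sineTr q 1 := by
  set F : ℝ → ℝ := fun r => (1 - Real.cos r) * (r ^ (q - 1) * Real.exp (-(3 * r))) with hF
  -- the derivative of `F` is `r^{q-1} e^{-3r} sin r - D`, `D ≥ 0`, and `F` vanishes at `0` and at `∞`
  set D : ℝ → ℝ := fun r => (1 - Real.cos r) *
    (((1 - q) * r ^ (q - 2) + 3 * r ^ (q - 1)) * Real.exp (-(3 * r))) with hD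
  have hpow : ∀ r : ℝ, 0 < r → r * r ^ (q - 1) = r ^ q := fun r hr => by
    rw [mul_comm, ← Real.rpow_add_one hr.ne']; congr 1; ring
  have hpow2 : ∀ r : ℝ, 0 < r → r * r ^ (q - 2) = r ^ (q - 1) := fun r hr => by
    rw [mul_comm, ← Real.rpow_add_one hr.ne']; congr 1; ring
  have hF0 : ∀ r, 0 < r → 0 ≤ F r := fun r hr =>
    mul_nonneg (sub_nonneg.2 (Real.cos_le_one r))
      (mul_nonneg (Real.rpow_nonneg hr.le _) (Real.exp_pos _).le)
  have hFle : ∀ r, 0 < r → F r ≤ r ^ q * Real.exp (-(3 * r)) := fun r hr => by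
    rw [← hpow r hr, mul_assoc]
    exact mul_le_mul_of_nonneg_right (one_sub_cos_le hr.le)
      (mul_nonneg (Real.rpow_nonneg hr.le _) (Real.exp_pos _).le)
  have hFz : F 0 = 0 := by simp [hF]
  have hcont : ContinuousWithinAt F (Ici 0) 0 := by
    have hb : Filter.Tendsto (fun r : ℝ => r ^ q * Real.exp (-(3 * r))) (nhdsWithin 0 (Ici 0))
        (nhds 0) := by
      have : ContinuousAt (fun r : ℝ => r ^ q * Real.exp (-(3 * r))) 0 :=
        (Real.continuousAt_rpow_const 0 q (Or.inr hq0.le)).mul (by fun_prop)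
      have h := this.tendsto
      simp only [Real.zero_rpow hq0.ne', zero_mul] at h
      exact h.mono_left nhdsWithin_le_nhds
    rw [ContinuousWithinAt, hFz]
    refine squeeze_zero' ?_ ?_ hb
    · filter_upwards [self_mem_nhdsWithin] with r hr
      rcases eq_or_lt_of_le (show (0:ℝ) ≤ r from hr) with h | h
      · rw [← h, hFz]
      · exact hF0 r h
    · filter_upwards [self_mem_nhdsWithin] with r hr
      rcases eq_or_lt_of_le (show (0:ℝ) ≤ r from hr) with h | h
      · rw [← h, hFz]; positivity
      · exact hFle r h
  have htop : Filter.Tendsto F Filter.atTop (nhds 0) := by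
    have hb := tendsto_rpow_mul_exp_neg_mul_atTop_nhds_zero q 3 (by norm_num)
    refine squeeze_zero' ?_ ?_ hb
    · filter_upwards [Filter.eventually_gt_atTop 0] with r hr using hF0 r hr
    · filter_upwards [Filter.eventually_gt_atTop 0] with r hr
      rw [neg_mul]; exact hFle r hr
  have hDpos : ∀ r, 0 < r → 0 ≤ D r := fun r hr => by
    refine mul_nonneg (sub_nonneg.2 (Real.cos_le_one r)) (mul_nonneg ?_ (Real.exp_pos _).le)
    have := Real.rpow_nonneg hr.le (q - 2)
    have := Real.rpow_nonneg hr.le (q - 1)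
    have : 0 ≤ 1 - q := by linarith
    positivity
  have hDint : IntegrableOn D (Ioi 0) := by
    refine Integrable.mono' ((integrableOn_gammaWeight hq0).const_mul 7) ?_ ?_
    · refine Measurable.aestronglyMeasurable ?_
      simp only [hD]; fun_prop
    · filter_upwards [ae_restrict_mem measurableSet_Ioi] with r hr
      have hr0 : (0:ℝ) < r := hr
      rw [Real.norm_of_nonneg (hDpos r hr0)]
      have a1 := Real.rpow_nonneg hr0.le (q - 2)
      have a2 := Real.rpow_nonneg hr0.le (q - 1)
      have a3 := one_sub_cos_le hr0.le
      have a4 := Real.neg_one_le_cos r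
      have a5 := Real.cos_le_one r
      have a6 := hpow2 r hr0
      have b1 : (1 - Real.cos r) * ((1 - q) * r ^ (q - 2)) ≤ r ^ (q - 1) := by
        calc _ ≤ r * (1 * r ^ (q - 2)) := by gcongr; linarith
          _ = _ := by rw [one_mul, a6]
      have b2 : (1 - Real.cos r) * (3 * r ^ (q - 1)) ≤ 2 * (3 * r ^ (q - 1)) := by
        gcongr; linarith
      calc D r = ((1 - Real.cos r) * ((1 - q) * r ^ (q - 2))
            + (1 - Real.cos r) * (3 * r ^ (q - 1))) * Real.exp (-(3 * r)) := by simp only [hD]; ring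
        _ ≤ (7 * r ^ (q - 1)) * Real.exp (-(3 * r)) := by gcongr; linarith
        _ = _ := by ring
  have hS := integrableOn_sineTr hq0 1
  have hderiv : ∀ r ∈ Ioi (0:ℝ), HasDerivAt F
      (r ^ (q - 1) * Real.exp (-(3 * r)) * Real.sin (1 * r) - D r) r := by
    intro r hr
    have hr0 : (0:ℝ) < r := hr
    have h1 : HasDerivAt (fun r => 1 - Real.cos r) (- -Real.sin r) r :=
      (Real.hasDerivAt_cos r).const_sub 1
    have h2 : HasDerivAt (fun r : ℝ => r ^ (q - 1)) ((q - 1) * r ^ (q - 1 - 1)) r :=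
      Real.hasDerivAt_rpow_const (Or.inl hr0.ne')
    have h3 : HasDerivAt (fun r : ℝ => Real.exp (-(3 * r))) (Real.exp (-(3 * r)) * (-(3 * 1))) r :=
      (((hasDerivAt_id r).const_mul 3).neg).exp
    have h4 : r ^ (q - 1) * Real.exp (-(3 * r)) * Real.sin (1 * r) - D r
        = - -Real.sin r * (r ^ (q - 1) * Real.exp (-(3 * r))) + (1 - Real.cos r) *
          ((q - 1) * r ^ (q - 1 - 1) * Real.exp (-(3 * r))
            + r ^ (q - 1) * (Real.exp (-(3 * r)) * (-(3 * 1)))) := by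
      rw [show q - 1 - 1 = q - 2 by ring, one_mul]; simp only [hD]; ring
    rw [h4]
    exact h1.mul (h2.mul h3)
  have key := integral_Ioi_of_hasDerivAt_of_tendsto hcont hderiv (hS.sub hDint) htop
  rw [integral_sub hS hDint, hFz, sub_zero, sub_eq_zero] at key
  rw [sineTr, key, integral_pos_iff_support_of_nonneg_ae ?_ hDint]
  · refine lt_of_lt_of_le ?_ (measure_mono (s := Ioo (0:ℝ) 1) fun r hr => ?_)
    · rw [Measure.restrict_apply measurableSet_Ioo, inter_eq_left.2 Ioo_subset_Ioi_self]
      simp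
    · have h1 : 0 < 1 - Real.cos r := by
        have := Real.cos_lt_cos_of_nonneg_of_le_pi le_rfl
          (hr.2.le.trans (by linarith [Real.pi_gt_three])) hr.1
        rw [Real.cos_zero] at this
        linarith
      have h2 : 0 < r ^ (q - 1) := Real.rpow_pos_of_pos hr.1 _
      have h3 : 0 ≤ (1 - q) * r ^ (q - 2) :=
        mul_nonneg (by linarith) (Real.rpow_nonneg hr.1.le _)
      have : 0 < D r := by simp only [hD]; positivity
      exact this.ne'
  · filter_upwards [ae_restrict_mem measurableSet_Ioi] with r hr using hDpos r hr

/-- The cubic interaction of three profiles of frequencies `a`, `b`, `c`. -/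
noncomputable def triple (q a b c : ℝ) : ℝ :=
  ∫ r in Ioi (0:ℝ), r ^ (q - 1) * ((Real.sin (a * r) * Real.exp (-r)) *
    (Real.sin (b * r) * Real.exp (-r)) * (Real.sin (c * r) * Real.exp (-r)))

lemma triple_eq {q : ℝ} (hq0 : 0 < q) (K σ : ℝ) : triple q K K (2 * K + σ) =
    1 / 2 * sineTr q (2 * K + σ) - 1 / 4 * sineTr q (4 * K + σ) - 1 / 4 * sineTr q σ := by
  have h1 := (integrableOn_sineTr hq0 (2 * K + σ)).const_mul (1 / 2)
  have h2 := (integrableOn_sineTr hq0 (4 * K + σ)).const_mul (1 / 4)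
  have h3 := (integrableOn_sineTr hq0 σ).const_mul (1 / 4)
  simp only [sineTr, ← integral_const_mul]
  rw [← integral_sub' h1 h2, ← integral_sub' (h1.sub h2) h3, triple]
  refine integral_congr_ae (Filter.Eventually.of_forall fun r => ?_)
  simp only [Pi.sub_apply]
  have e : Real.exp (-(3 * r)) = Real.exp (-r) * Real.exp (-r) * Real.exp (-r) := by
    rw [← Real.exp_add, ← Real.exp_add]; congr 1; ring
  have s1 : Real.sin ((2 * K + σ) * r) = Real.sin ((4 * K + σ) * r) * Real.cos (2 * (K * r))
      - Real.cos ((4 * K + σ) * r) * Real.sin (2 * (K * r)) := by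
    rw [← Real.sin_sub]; congr 1; ring
  have s2 : Real.sin (σ * r) = Real.sin ((2 * K + σ) * r) * Real.cos (2 * (K * r))
      - Real.cos ((2 * K + σ) * r) * Real.sin (2 * (K * r)) := by
    rw [← Real.sin_sub]; congr 1; ring
  have s3 : Real.sin ((4 * K + σ) * r) = Real.sin ((2 * K + σ) * r) * Real.cos (2 * (K * r))
      + Real.cos ((2 * K + σ) * r) * Real.sin (2 * (K * r)) := by
    rw [← Real.sin_add]; congr 1; ring
  rw [e, s3, s2, Real.cos_two_mul, Real.cos_sq']
  ring

/-- The interaction takes both signs, already among nonnegative frequencies. -/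
lemma exists_triple_signs {q : ℝ} (hq0 : 0 < q) (hq1 : q ≤ 1) :
    ∃ K : ℝ, 1 ≤ K ∧ triple q K K (2 * K + 1) < 0 ∧ 0 < triple q K K (2 * K + -1) := by
  have hp := sineTr_one_pos hq0 hq1
  have ht := (tendsto_sineTr hq0).eventually
    (Metric.ball_mem_nhds (0:ℝ) (by linarith : 0 < sineTr q 1 / 8))
  obtain ⟨M, hM⟩ := Filter.eventually_atTop.1 ht
  refine ⟨max M 1, le_max_right _ _, ?_, ?_⟩
  all_goals
    rw [triple_eq hq0]
    have hK1 := le_max_left M 1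
    have hK2 := le_max_right M 1
    set K := max M 1
  · have a1 := hM (2 * K + 1) (by linarith)
    have a2 := hM (4 * K + 1) (by linarith)
    simp only [Real.dist_eq, sub_zero, abs_lt] at a1 a2
    linarith [a1.1, a1.2, a2.1, a2.2]
  · have a1 := hM (2 * K + -1) (by linarith)
    have a2 := hM (4 * K + -1) (by linarith)
    simp only [Real.dist_eq, sub_zero, abs_lt] at a1 a2
    rw [sineTr_neg q 1]
    linarith [a1.1, a1.2, a2.1, a2.2]

/-! ### Testing a function of three variables against a product of profiles -/

/-- Lebesgue measure on the half-line. -/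
noncomputable def halfLine : Measure ℝ := volume.restrict (Ioi 0)

instance : SFinite halfLine := by unfold halfLine; infer_instance

/-- Lebesgue measure on the positive octant. -/
noncomputable def octant : Measure (ℝ × ℝ × ℝ) := halfLine.prod (halfLine.prod halfLine)

instance : SFinite octant := by unfold octant; infer_instance

lemma ae_octant : ∀ᵐ v ∂octant, 0 < v.1 ∧ 0 < v.2.1 ∧ 0 < v.2.2 := by
  have h : ∀ᵐ x ∂halfLine, (0:ℝ) < x := ae_restrict_mem measurableSet_Ioi
  have h2 : ∀ᵐ p ∂halfLine.prod halfLine, (0:ℝ) < p.1 ∧ (0:ℝ) < p.2 :=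
    (Measure.quasiMeasurePreserving_fst.ae h).and (Measure.quasiMeasurePreserving_snd.ae h)
  exact (Measure.quasiMeasurePreserving_fst.ae h).and (Measure.quasiMeasurePreserving_snd.ae h2)

/-- The tensor product of three profiles. -/
noncomputable def prof3 (a b c : ℝ) (v : ℝ × ℝ × ℝ) : ℝ :=
  prof a v.1 * (prof b v.2.1 * prof c v.2.2)

lemma continuous_prof3 (a b c : ℝ) : Continuous (prof3 a b c) :=
  ((continuous_prof a).comp continuous_fst).mul
    (((continuous_prof b).comp (continuous_fst.comp continuous_snd)).mul
      ((continuous_prof c).comp (continuous_snd.comp continuous_snd)))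

/-- The majorant used for all integrability statements on the octant. -/
noncomputable def majorant (v : ℝ × ℝ × ℝ) : ℝ := (1 + v.1) * ((1 + v.2.1) * (1 + v.2.2))

lemma integrable_prof3_majorant (a b c : ℝ) :
    Integrable (fun v => prof3 a b c v * majorant v) octant := by
  have h := Integrable.mul_prod (μ := halfLine) (ν := halfLine.prod halfLine)
    (integrableOn_prof_mul_one_add a)
    (Integrable.mul_prod (integrableOn_prof_mul_one_add b) (integrableOn_prof_mul_one_add c))
  refine h.congr (Filter.Eventually.of_forall fun v => ?_)
  simp only [prof3, majorant]; ring

lemma integrable_prof3 (a b c : ℝ) : Integrable (prof3 a b c) octant :=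
  Integrable.mul_prod (μ := halfLine) (ν := halfLine.prod halfLine) (integrableOn_prof a)
    (Integrable.mul_prod (integrableOn_prof b) (integrableOn_prof c))

lemma integral_prof3 (a b c : ℝ) : ∫ v, prof3 a b c v ∂octant = 0 := by
  have h := integral_prod_mul (μ := halfLine) (ν := halfLine.prod halfLine) (prof a)
    (fun p => prof b p.1 * prof c p.2)
  have h2 : ∫ x, prof a x ∂halfLine = 0 := integral_prof a
  rw [h2, zero_mul] at h
  exact h

lemma integral_prof3_mul_cos_nonneg {a b c u v w : ℝ} (ha : 0 ≤ a) (hb : 0 ≤ b) (hc : 0 ≤ c)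
    (hu : 0 ≤ u) (hv : 0 ≤ v) (hw : 0 ≤ w) :
    0 ≤ ∫ p, prof3 a b c p * (Real.cos (u * p.1) * (Real.cos (v * p.2.1) * Real.cos (w * p.2.2)))
      ∂octant := by
  have h := integral_prod_mul (μ := halfLine) (ν := halfLine.prod halfLine)
    (fun x => prof a x * Real.cos (u * x))
    (fun p => (prof b p.1 * Real.cos (v * p.1)) * (prof c p.2 * Real.cos (w * p.2)))
  have h2 := integral_prod_mul (μ := halfLine) (ν := halfLine)
    (fun x => prof b x * Real.cos (v * x)) (fun x => prof c x * Real.cos (w * x))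
  rw [h2] at h
  have h3 : (∫ p, prof3 a b c p *
      (Real.cos (u * p.1) * (Real.cos (v * p.2.1) * Real.cos (w * p.2.2))) ∂octant) = _ :=
    (integral_congr_ae (Filter.Eventually.of_forall fun p => by simp only [prof3]; ring)).trans h
  rw [h3]
  exact mul_nonneg (integral_prof_mul_cos_nonneg ha hu)
    (mul_nonneg (integral_prof_mul_cos_nonneg hb hv) (integral_prof_mul_cos_nonneg hc hw))

/-- Against a product of cosines the profiles test nonnegatively, so `1 - cos cos cos` is tested
nonpositively. -/
lemma integral_prof3_one_sub_cos_nonpos {a b c u v w : ℝ} (ha : 0 ≤ a) (hb : 0 ≤ b) (hc : 0 ≤ c)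
    (hu : 0 ≤ u) (hv : 0 ≤ v) (hw : 0 ≤ w) :
    ∫ p, prof3 a b c p *
      (1 - Real.cos (u * p.1) * (Real.cos (v * p.2.1) * Real.cos (w * p.2.2))) ∂octant ≤ 0 := by
  have h1 : Integrable (fun p => prof3 a b c p *
      (Real.cos (u * p.1) * (Real.cos (v * p.2.1) * Real.cos (w * p.2.2)))) octant := by
    refine Integrable.mul_bdd (c := 1) (integrable_prof3 a b c) (by fun_prop) ?_
    refine Filter.Eventually.of_forall fun p => ?_
    simp only [norm_mul, Real.norm_eq_abs]
    exact mul_le_one₀ (Real.abs_cos_le_one _) (by positivity)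
      (mul_le_one₀ (Real.abs_cos_le_one _) (by positivity) (Real.abs_cos_le_one _))
  simp_rw [mul_sub, mul_one]
  rw [integral_sub (integrable_prof3 a b c) h1, integral_prof3]
  have := integral_prof3_mul_cos_nonneg ha hb hc hu hv hw
  linarith

lemma integral_prof_ite (a : ℝ) {r : ℝ} (hr : 0 ≤ r) (H0 H1 : ℝ) :
    ∫ x, prof a x * (if r < x then H1 else H0) ∂halfLine
      = (H0 - H1) * (Real.sin (a * r) * Real.exp (-r)) := by
  have h0 : Integrable (fun x => H1 * prof a x) halfLine := (integrableOn_prof a).const_mul H1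
  have h1 : Integrable (fun x => (H0 - H1) * (Iic r).indicator (prof a) x) halfLine :=
    (Integrable.indicator (integrableOn_prof a) measurableSet_Iic).const_mul _
  have h2 : ∀ x, prof a x * (if r < x then H1 else H0)
      = H1 * prof a x + (H0 - H1) * (Iic r).indicator (prof a) x := by
    intro x
    by_cases hx : r < x
    · rw [if_pos hx, indicator_of_notMem (by simpa using hx)]; ring
    · rw [if_neg hx, indicator_of_mem (by simpa using hx)]; ring
  simp_rw [h2]
  rw [integral_add h0 h1, integral_const_mul, integral_const_mul,
    integral_indicator measurableSet_Iic]
  have h3 : ∫ x, prof a x ∂halfLine = 0 := integral_prof a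
  rw [h3, halfLine, Measure.restrict_restrict measurableSet_Iic, Iic_inter_Ioi,
    integral_prof_Ioc a hr]
  ring

/-- The measure of the part of the partition of masses `a, b, c` on which a step function with
values `v` exceeds `r`. -/
noncomputable def stepDistr (a b c : ℝ) (v : ℝ × ℝ × ℝ) (r : ℝ) : ℝ :=
  (if r < v.1 then a else 0) + ((if r < v.2.1 then b else 0) + (if r < v.2.2 then c else 0))

/-- The third mixed difference of `W` at `0` with increments `a, b, c`. -/
def thirdDiff (W : ℝ → ℝ) (a b c : ℝ) : ℝ :=
  W (a + (b + c)) - W (a + b) - W (a + c) - W (b + c) + W a + W b + W c - W 0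

lemma stepDistr_measurable (a b c : ℝ) :
    Measurable fun p : (ℝ × ℝ × ℝ) × ℝ => stepDistr a b c p.1 p.2 := by
  unfold stepDistr
  refine Measurable.add ?_ (Measurable.add ?_ ?_)
  · exact Measurable.ite (measurableSet_lt (by fun_prop) (by fun_prop)) measurable_const
      measurable_const
  · exact Measurable.ite (measurableSet_lt (by fun_prop) (by fun_prop)) measurable_const
      measurable_const
  · exact Measurable.ite (measurableSet_lt (by fun_prop) (by fun_prop)) measurable_const
      measurable_const

lemma stepDistr_mem {a b c : ℝ} (ha : 0 ≤ a) (hb : 0 ≤ b) (hc : 0 ≤ c) (habc : a + (b + c) ≤ 1)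
    (v : ℝ × ℝ × ℝ) (r : ℝ) : stepDistr a b c v r ∈ Icc (0:ℝ) 1 := by
  unfold stepDistr
  constructor <;> split_ifs <;> linarith

/-- Testing against the profiles extracts the third difference of `W`. -/
lemma integral_prof3_stepDistr (a b c : ℝ) (A B C : ℝ) {r : ℝ} (hr : 0 ≤ r) {W : ℝ → ℝ}
    (hWm : Measurable fun v => W (stepDistr A B C v r))
    (hWb : ∃ M, ∀ v, ‖W (stepDistr A B C v r)‖ ≤ M) :
    ∫ v, prof3 a b c v * W (stepDistr A B C v r) ∂octant
      = - thirdDiff W A B C * ((Real.sin (a * r) * Real.exp (-r)) *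
    (Real.sin (b * r) * Real.exp (-r)) * (Real.sin (c * r) * Real.exp (-r))) := by
  obtain ⟨M, hM⟩ := hWb
  have hInt : Integrable (fun v => prof3 a b c v * W (stepDistr A B C v r)) octant :=
    (integrable_prof3 a b c).mul_bdd (c := M) hWm.aestronglyMeasurable
      (Filter.Eventually.of_forall hM)
  rw [octant] at hInt ⊢
  rw [integral_prod _ hInt]
  have hz : ∀ x y, ∫ z, prof3 a b c (x, y, z) * W (stepDistr A B C (x, y, z) r) ∂halfLine
      = prof a x * (prof b y * ((W ((if r < x then A else 0) + ((if r < y then B else 0) + 0))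
        - W ((if r < x then A else 0) + ((if r < y then B else 0) + C)))
          * (Real.sin (c * r) * Real.exp (-r)))) := by
    intro x y
    rw [← integral_prof_ite c hr, ← integral_const_mul, ← integral_const_mul]
    refine integral_congr_ae (Filter.Eventually.of_forall fun z => ?_)
    simp only [prof3, stepDistr]
    split_ifs <;> ring
  have hy : ∀ x, Integrable (fun p => prof3 a b c (x, p) * W (stepDistr A B C (x, p) r))
      (halfLine.prod halfLine) →
      ∫ p, prof3 a b c (x, p) * W (stepDistr A B C (x, p) r) ∂(halfLine.prod halfLine)
      = prof a x * (((W ((if r < x then A else 0) + (0 + 0)) -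
            W ((if r < x then A else 0) + (0 + C)))
          - (W ((if r < x then A else 0) + (B + 0)) - W ((if r < x then A else 0) + (B + C))))
          * (Real.sin (b * r) * Real.exp (-r)) * (Real.sin (c * r) * Real.exp (-r))) := by
    intro x hx
    rw [integral_prod _ hx]
    simp_rw [hz]
    rw [← integral_prof_ite b hr, ← integral_mul_const, ← integral_const_mul]
    refine integral_congr_ae (Filter.Eventually.of_forall fun y => ?_)
    simp only
    split_ifs <;> ring
  rw [integral_congr_ae (hInt.prod_right_ae.mono hy)]
  have hx := integral_prof_ite a hr
    (((W (0 + (0 + 0)) - W (0 + (0 + C))) - (W (0 + (B + 0)) - W (0 + (B + C))))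
          * (Real.sin (b * r) * Real.exp (-r)) * (Real.sin (c * r) * Real.exp (-r)))
    (((W (A + (0 + 0)) - W (A + (0 + C))) - (W (A + (B + 0)) - W (A + (B + C))))
          * (Real.sin (b * r) * Real.exp (-r)) * (Real.sin (c * r) * Real.exp (-r)))
  refine Eq.trans (integral_congr_ae (Filter.Eventually.of_forall fun x => ?_)) (hx.trans ?_)
  · simp only
    split_ifs <;> ring
  · simp only [thirdDiff, add_zero, zero_add]
    ring

/-- Fubini for a function on the octant given as a nonnegative superposition. -/
lemma integral_prof3_superposition {Θ : Type*} [MeasurableSpace Θ] (κ : Measure Θ) [SFinite κ]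
    {g : (ℝ × ℝ × ℝ) × Θ → ℝ} (hg : Measurable g) {N : ℝ × ℝ × ℝ → ℝ} {C : ℝ} (a b c : ℝ)
    (h : ∀ v : ℝ × ℝ × ℝ, 0 < v.1 → 0 < v.2.1 → 0 < v.2.2 →
      (∀ᵐ θ ∂κ, 0 ≤ g (v, θ)) ∧ Integrable (fun θ => g (v, θ)) κ ∧ ∫ θ, g (v, θ) ∂κ = N v ∧
        N v ≤ C * majorant v) :
    ∫ v, prof3 a b c v * N v ∂octant = ∫ θ, ∫ v, prof3 a b c v * g (v, θ) ∂octant ∂κ := by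
  have hm : AEStronglyMeasurable (fun p : (ℝ × ℝ × ℝ) × Θ => prof3 a b c p.1 * g p)
      (octant.prod κ) :=
    (((continuous_prof3 a b c).measurable.comp measurable_fst).mul hg).aestronglyMeasurable
  have hInt : Integrable (fun p : (ℝ × ℝ × ℝ) × Θ => prof3 a b c p.1 * g p) (octant.prod κ) := by
    rw [integrable_prod_iff hm]
    constructor
    · filter_upwards [ae_octant] with v hv
      exact ((h v hv.1 hv.2.1 hv.2.2).2.1).const_mul _
    · refine Integrable.mono' (((integrable_prof3_majorant a b c).norm).const_mul C)
        hm.norm.integral_prod_right' ?_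
      filter_upwards [ae_octant] with v hv
      obtain ⟨h1, h2, h3, h4⟩ := h v hv.1 hv.2.1 hv.2.2
      have hmaj : 0 ≤ majorant v := by
        have := hv.1; have := hv.2.1; have := hv.2.2
        unfold majorant; positivity
      have h5 : ∫ θ, ‖prof3 a b c v * g (v, θ)‖ ∂κ = ‖prof3 a b c v‖ * N v := by
        rw [← h3, ← integral_const_mul]
        refine integral_congr_ae ?_
        filter_upwards [h1] with θ hθ
        rw [norm_mul, Real.norm_of_nonneg hθ]
      have hN : 0 ≤ N v := h3 ▸ integral_nonneg_of_ae h1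
      rw [h5, Real.norm_of_nonneg (mul_nonneg (norm_nonneg _) hN), norm_mul,
        Real.norm_of_nonneg hmaj]
      calc _ ≤ ‖prof3 a b c v‖ * (C * majorant v) := by gcongr
        _ = _ := by ring
  rw [← integral_integral_swap hInt]
  refine integral_congr_ae ?_
  filter_upwards [ae_octant] with v hv
  rw [integral_const_mul, (h v hv.1 hv.2.1 hv.2.2).2.2.1]

/-! ### Lorentz norms of step functions -/

/-- The step function with values `x`, `y`, `z` on consecutive intervals of lengths `a`, `b`, `c`,
starting at `0`. -/
noncomputable def stepFn (a b c x y z : ℝ) : ℝ → ℝ :=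
  x • (Ioo 0 a).indicator 1 + y • (Ioo a (a + b)).indicator 1
    + z • (Ioo (a + b) (a + (b + c))).indicator 1

section weight
variable {w : ℝ → ℝ}

lemma primW_zero : primW w 0 = 0 := by simp [primW]

lemma primW_mono (hw_pos : ∀ t ∈ Ioo (0:ℝ) 1, 0 < w t) (hw : IntegrableOn w (Ioo (0:ℝ) 1))
    {d d' : ℝ} (h : d ≤ d') (h' : d' ≤ 1) : primW w d ≤ primW w d' := by
  refine setIntegral_mono_set (hw.mono_set (Ioo_subset_Ioo_right h')) ?_
    (Ioo_subset_Ioo_right h).eventuallyLE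
  filter_upwards [ae_restrict_mem measurableSet_Ioo] with t ht
  exact (hw_pos t ⟨ht.1, ht.2.trans_le h'⟩).le

lemma primW_nonneg (hw_pos : ∀ t ∈ Ioo (0:ℝ) 1, 0 < w t) (hw : IntegrableOn w (Ioo (0:ℝ) 1))
    {d : ℝ} (h : d ∈ Icc (0:ℝ) 1) : 0 ≤ primW w d :=
  primW_zero.symm.le.trans (primW_mono hw_pos hw h.1 h.2)

lemma primW_le_one (hw_pos : ∀ t ∈ Ioo (0:ℝ) 1, 0 < w t) (hw : IntegrableOn w (Ioo (0:ℝ) 1))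
    (hw1 : (∫ t in Ioo (0:ℝ) 1, w t) = 1) {d : ℝ} (h : d ∈ Icc (0:ℝ) 1) : primW w d ≤ 1 :=
  (primW_mono hw_pos hw h.2 le_rfl).trans hw1.le

lemma primW_pos (hw_pos : ∀ t ∈ Ioo (0:ℝ) 1, 0 < w t) (hw : IntegrableOn w (Ioo (0:ℝ) 1))
    {d : ℝ} (h : 0 < d) (h1 : d ≤ 1) : 0 < primW w d := by
  rw [primW, setIntegral_pos_iff_support_of_nonneg_ae ?_ (hw.mono_set (Ioo_subset_Ioo_right h1))]
  · refine lt_of_lt_of_le ?_ (measure_mono (s := Ioo (0:ℝ) d) fun t ht =>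
      ⟨(hw_pos t ⟨ht.1, ht.2.trans_le h1⟩).ne', ht⟩)
    simpa using h
  · filter_upwards [ae_restrict_mem measurableSet_Ioo] with t ht
    exact (hw_pos t ⟨ht.1, ht.2.trans_le h1⟩).le

lemma primW_comp_measurable (hw_pos : ∀ t ∈ Ioo (0:ℝ) 1, 0 < w t)
    (hw : IntegrableOn w (Ioo (0:ℝ) 1)) {α : Type*} [MeasurableSpace α] {d : α → ℝ}
    (hd : Measurable d) (hd1 : ∀ x, d x ∈ Icc (0:ℝ) 1) : Measurable fun x => primW w (d x) := by
  have hmono : Monotone fun s => primW w (min s 1) := fun s t hst =>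
    primW_mono hw_pos hw (min_le_min_right 1 hst) (min_le_right _ _)
  have h := hmono.measurable.comp hd
  simp only [Function.comp_def, fun x => min_eq_left (hd1 x).2] at h
  exact h

/-- `q⁻¹` times the `q`-th power of the Lorentz quasi-norm of a step function with values `v` on
pieces of measure `a`, `b`, `c`. -/
noncomputable def stepNorm (w : ℝ → ℝ) (q a b c : ℝ) (v : ℝ × ℝ × ℝ) : ℝ :=
  ∫ r, primW w (stepDistr a b c v r) * r ^ (q - 1) ∂halfLine

lemma stepDistr_eq_zero {a b c : ℝ} {v : ℝ × ℝ × ℝ} (h1 : 0 ≤ v.1) (h2 : 0 ≤ v.2.1)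
    (h3 : 0 ≤ v.2.2) {r : ℝ} (hr : v.1 + v.2.1 + v.2.2 ≤ r) : stepDistr a b c v r = 0 := by
  rw [stepDistr, if_neg (by linarith), if_neg (by linarith), if_neg (by linarith)]
  simp

lemma stepNorm_bound (hw_pos : ∀ t ∈ Ioo (0:ℝ) 1, 0 < w t)
    (hw : IntegrableOn w (Ioo (0:ℝ) 1)) (hw1 : (∫ t in Ioo (0:ℝ) 1, w t) = 1)
    {q a b c : ℝ} (ha : 0 < a) (hb : 0 < b) (hc : 0 < c)
    (habc : a + (b + c) ≤ 1)
    {v : ℝ × ℝ × ℝ} (h1 : 0 ≤ v.1) (h2 : 0 ≤ v.2.1)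
    (h3 : 0 ≤ v.2.2) {r : ℝ} (hr : 0 < r) :
    primW w (stepDistr a b c v r) * r ^ (q - 1)
      ≤ (Ioc 0 (v.1 + v.2.1 + v.2.2)).indicator (fun r => r ^ (q - 1)) r := by
  have hr' := Real.rpow_nonneg hr.le (q - 1)
  by_cases hm : r ≤ v.1 + v.2.1 + v.2.2
  · rw [indicator_of_mem (show r ∈ Ioc 0 (v.1 + v.2.1 + v.2.2) from ⟨hr, hm⟩)]
    exact mul_le_of_le_one_left hr'
      (primW_le_one hw_pos hw hw1 (stepDistr_mem ha.le hb.le hc.le habc v r))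
  · rw [stepDistr_eq_zero h1 h2 h3 (not_le.1 hm).le, primW_zero, zero_mul]
    exact indicator_nonneg (fun x hx => Real.rpow_nonneg hx.1.le _) _

lemma integrable_stepNorm (hw_pos : ∀ t ∈ Ioo (0:ℝ) 1, 0 < w t)
    (hw : IntegrableOn w (Ioo (0:ℝ) 1)) (hw1 : (∫ t in Ioo (0:ℝ) 1, w t) = 1)
    {q a b c : ℝ} (hq0 : 0 < q) (ha : 0 < a) (hb : 0 < b) (hc : 0 < c)
    (habc : a + (b + c) ≤ 1)
    {v : ℝ × ℝ × ℝ} (h1 : 0 ≤ v.1) (h2 : 0 ≤ v.2.1) (h3 : 0 ≤ v.2.2) :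
    Integrable (fun r => primW w (stepDistr a b c v r) * r ^ (q - 1)) halfLine := by
  have hm : 0 ≤ v.1 + v.2.1 + v.2.2 := by positivity
  have hI : IntegrableOn (fun r : ℝ => r ^ (q - 1)) (Ioc 0 (v.1 + v.2.1 + v.2.2)) :=
    (intervalIntegrable_iff_integrableOn_Ioc_of_le hm).1
      (intervalIntegral.intervalIntegrable_rpow' (by linarith))
  refine Integrable.mono' ((integrable_indicator_iff measurableSet_Ioc).2 hI).integrableOn ?_ ?_
  · refine Measurable.aestronglyMeasurable (Measurable.mul ?_ (by fun_prop))
    exact primW_comp_measurable hw_pos hw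
      ((stepDistr_measurable a b c).comp (measurable_const.prodMk measurable_id))
      (fun r => stepDistr_mem ha.le hb.le hc.le habc v r)
  · filter_upwards [ae_restrict_mem measurableSet_Ioi] with r hr
    rw [Real.norm_of_nonneg (mul_nonneg
      (primW_nonneg hw_pos hw (stepDistr_mem ha.le hb.le hc.le habc v r))
      (Real.rpow_nonneg (le_of_lt hr) _))]
    exact stepNorm_bound hw_pos hw hw1 ha hb hc habc h1 h2 h3 hr

lemma stepNorm_le_majorant (hw_pos : ∀ t ∈ Ioo (0:ℝ) 1, 0 < w t)
    (hw : IntegrableOn w (Ioo (0:ℝ) 1)) (hw1 : (∫ t in Ioo (0:ℝ) 1, w t) = 1)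
    {q a b c : ℝ} (hq0 : 0 < q) (hq1 : q ≤ 1)
    (ha : 0 < a) (hb : 0 < b) (hc : 0 < c)
    (habc : a + (b + c) ≤ 1)
    {v : ℝ × ℝ × ℝ} (h1 : 0 ≤ v.1) (h2 : 0 ≤ v.2.1) (h3 : 0 ≤ v.2.2) :
    stepNorm w q a b c v ≤ q⁻¹ * majorant v := by
  have hm : 0 ≤ v.1 + v.2.1 + v.2.2 := by positivity
  have hI : IntegrableOn (fun r : ℝ => r ^ (q - 1)) (Ioc 0 (v.1 + v.2.1 + v.2.2)) :=
    (intervalIntegrable_iff_integrableOn_Ioc_of_le hm).1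
      (intervalIntegral.intervalIntegrable_rpow' (by linarith))
  have h4 : stepNorm w q a b c v ≤
      ∫ r, (Ioc 0 (v.1 + v.2.1 + v.2.2)).indicator (fun r => r ^ (q - 1)) r ∂halfLine := by
    refine integral_mono_ae (integrable_stepNorm hw_pos hw hw1 hq0 ha hb hc habc h1 h2 h3)
      ((integrable_indicator_iff measurableSet_Ioc).2 hI).integrableOn ?_
    filter_upwards [ae_restrict_mem measurableSet_Ioi] with r hr
    exact stepNorm_bound hw_pos hw hw1 ha hb hc habc h1 h2 h3 hr
  rw [integral_indicator measurableSet_Ioc, halfLine, Measure.restrict_restrict measurableSet_Ioc,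
    inter_eq_left.2 Ioc_subset_Ioi_self, ← intervalIntegral.integral_of_le hm,
    integral_rpow (Or.inl (by linarith)), sub_add_cancel, Real.zero_rpow hq0.ne', sub_zero,
    div_eq_inv_mul] at h4
  refine h4.trans (mul_le_mul_of_nonneg_left ?_ (by positivity))
  set m := v.1 + v.2.1 + v.2.2 with hm'
  have h5 : m ^ q ≤ 1 + m := by
    calc m ^ q ≤ (1 + m) ^ q := Real.rpow_le_rpow hm (by linarith) hq0.le
      _ ≤ (1 + m) ^ (1:ℝ) := Real.rpow_le_rpow_of_exponent_le (by linarith) hq1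
      _ = 1 + m := Real.rpow_one _
  refine h5.trans ?_
  have e1 := mul_nonneg h1 h2
  have e2 := mul_nonneg h1 h3
  have e3 := mul_nonneg h2 h3
  have e4 := mul_nonneg h1 e3
  rw [majorant, hm']
  nlinarith

lemma stepNorm_pos (hw_pos : ∀ t ∈ Ioo (0:ℝ) 1, 0 < w t)
    (hw : IntegrableOn w (Ioo (0:ℝ) 1)) (hw1 : (∫ t in Ioo (0:ℝ) 1, w t) = 1)
    {q a b c : ℝ} (hq0 : 0 < q) (ha : 0 < a) (hb : 0 < b) (hc : 0 < c)
    (habc : a + (b + c) ≤ 1)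
    {v : ℝ × ℝ × ℝ} (h1 : 0 ≤ v.1) (h2 : 0 ≤ v.2.1) (h3 : 0 ≤ v.2.2)
    (h : 0 < v.1 ∨ 0 < v.2.1 ∨ 0 < v.2.2) : 0 < stepNorm w q a b c v := by
  obtain ⟨m, hm, hm'⟩ : ∃ m > 0, ∀ r < m, 0 < stepDistr a b c v r := by
    unfold stepDistr
    rcases h with h | h | h
    · exact ⟨_, h, fun r hr => by rw [if_pos hr]; split_ifs <;> linarith⟩
    · exact ⟨_, h, fun r hr => by rw [if_pos hr]; split_ifs <;> linarith⟩
    · exact ⟨_, h, fun r hr => by rw [if_pos hr]; split_ifs <;> linarith⟩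
  rw [stepNorm, integral_pos_iff_support_of_nonneg_ae ?_
    (integrable_stepNorm hw_pos hw hw1 hq0 ha hb hc habc h1 h2 h3)]
  · refine lt_of_lt_of_le ?_ (measure_mono (s := Ioo (0:ℝ) m) fun r hr => ?_)
    · rw [halfLine, Measure.restrict_apply measurableSet_Ioo, inter_eq_left.2 Ioo_subset_Ioi_self]
      simpa using hm
    · exact (mul_pos (primW_pos hw_pos hw (hm' r hr.2)
        (stepDistr_mem ha.le hb.le hc.le habc v r).2) (Real.rpow_pos_of_pos hr.1 _)).ne'
  · filter_upwards [ae_restrict_mem measurableSet_Ioi] with r hr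
    exact mul_nonneg (primW_nonneg hw_pos hw (stepDistr_mem ha.le hb.le hc.le habc v r))
      (Real.rpow_nonneg (le_of_lt hr) _)

lemma distr_stepFn {a b c : ℝ} (ha : 0 < a) (hb : 0 < b) (hc : 0 < c)
    (habc : a + (b + c) ≤ 1)
    (x y z : ℝ) {r : ℝ} (hr : 0 ≤ r) :
    distr (stepFn a b c x y z) r = stepDistr a b c (|x|, |y|, |z|) r := by
  have hset : {u ∈ Ioo (0:ℝ) 1 | r < |stepFn a b c x y z u|}
      = {u ∈ Ioo 0 a | r < |x|} ∪ ({u ∈ Ioo a (a + b) | r < |y|} ∪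
        {u ∈ Ioo (a + b) (a + (b + c)) | r < |z|}) := by
    ext u
    simp only [mem_union, mem_ofPred_eq, stepFn, Pi.add_apply, Pi.smul_apply, smul_eq_mul]
    by_cases h1 : u ∈ Ioo 0 a
    · have h2 : u ∉ Ioo a (a + b) := fun h => by linarith [h.1, h1.2]
      have h3 : u ∉ Ioo (a + b) (a + (b + c)) := fun h => by linarith [h.1, h1.2]
      have h4 : u ∈ Ioo (0:ℝ) 1 := ⟨h1.1, by linarith [h1.2]⟩
      simp only [indicator_of_mem h1, indicator_of_notMem h2, indicator_of_notMem h3, h1, h2, h3,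
        h4, Pi.one_apply]
      simp
    by_cases h2 : u ∈ Ioo a (a + b)
    · have h3 : u ∉ Ioo (a + b) (a + (b + c)) := fun h => by linarith [h.1, h2.2]
      have h4 : u ∈ Ioo (0:ℝ) 1 := ⟨by linarith [h2.1], by linarith [h2.2]⟩
      simp only [indicator_of_mem h2, indicator_of_notMem h1, indicator_of_notMem h3, h1, h2, h3,
        h4, Pi.one_apply]
      simp
    by_cases h3 : u ∈ Ioo (a + b) (a + (b + c))
    · have h4 : u ∈ Ioo (0:ℝ) 1 := ⟨by linarith [h3.1], by linarith [h3.2]⟩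
      simp only [indicator_of_mem h3, indicator_of_notMem h1, indicator_of_notMem h2, h1, h2, h3,
        h4, Pi.one_apply]
      simp
    · simp only [indicator_of_notMem h3, indicator_of_notMem h1, indicator_of_notMem h2, h1, h2, h3]
      simp [hr]
  have hone : ∀ (l l' t : ℝ), l ≤ l' →
      volume.real {u ∈ Ioo l l' | r < |t|} = if r < |t| then l' - l else 0 := by
    intro l l' t hl
    split_ifs with h
    · have : {u ∈ Ioo l l' | r < |t|} = Ioo l l' := by ext u; simp [h]
      rw [this, Real.volume_real_Ioo_of_le hl]
    · simp [h]
  have hms : ∀ (l l' t : ℝ), MeasurableSet {u ∈ Ioo l l' | r < |t|} := fun l l' t =>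
    measurableSet_Ioo.inter (MeasurableSet.const _)
  have hfin : ∀ (l l' t : ℝ), volume {u ∈ Ioo l l' | r < |t|} ≠ ⊤ := fun l l' t =>
    ne_top_of_le_ne_top (measure_Ioo_lt_top).ne (measure_mono fun u hu => hu.1)
  rw [distr, hset]
  change volume.real _ = _
  rw [measureReal_union ?_ ((hms _ _ _).union (hms _ _ _)) (hfin _ _ _)
      (measure_union_lt_top (hfin _ _ _).lt_top (hfin _ _ _).lt_top).ne,
    measureReal_union ?_ (hms _ _ _) (hfin _ _ _) (hfin _ _ _), hone _ _ _ (by linarith),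
    hone _ _ _ (by linarith), hone _ _ _ (by linarith), stepDistr]
  · simp only
    congr 1
    · simp
    · congr 1
      · simp
      · congr 1; ring
  · rw [disjoint_left]
    rintro u ⟨hu, _⟩ ⟨hu', _⟩
    linarith [hu.2, hu'.1]
  · rw [disjoint_left]
    rintro u ⟨hu, _⟩ (⟨hu', _⟩ | ⟨hu', _⟩) <;> linarith [hu.2, hu'.1]

lemma lorentz_stepFn (hw_pos : ∀ t ∈ Ioo (0:ℝ) 1, 0 < w t)
    (hw : IntegrableOn w (Ioo (0:ℝ) 1)) (hw1 : (∫ t in Ioo (0:ℝ) 1, w t) = 1)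
    {q a b c : ℝ} (hq0 : 0 < q) (ha : 0 < a) (hb : 0 < b) (hc : 0 < c)
    (habc : a + (b + c) ≤ 1)
    (x y z : ℝ) :
    Measurable (stepFn a b c x y z) ∧
    (∫⁻ t in Ioo (0:ℝ) 1, ENNReal.ofReal (decRearr (stepFn a b c x y z) t ^ q * w t)) < ⊤ ∧
    (∫ t in Ioo (0:ℝ) 1, decRearr (stepFn a b c x y z) t ^ q * w t)
      = q * stepNorm w q a b c (|x|, |y|, |z|) := by
  set f : ℝ → ℝ := stepFn a b c x y z with hf
  have hfm : Measurable f :=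
    (((measurable_one.indicator measurableSet_Ioo).const_smul x).add
      ((measurable_one.indicator measurableSet_Ioo).const_smul y)).add
      ((measurable_one.indicator measurableSet_Ioo).const_smul z)
  have hI := integrable_stepNorm hw_pos hw hw1 hq0 ha hb hc habc (v := (|x|, |y|, |z|))
    (abs_nonneg x) (abs_nonneg y) (abs_nonneg z)
  have hnn : 0 ≤ᵐ[halfLine] fun r =>
      primW w (stepDistr a b c (|x|, |y|, |z|) r) * r ^ (q - 1) := by
    filter_upwards [ae_restrict_mem measurableSet_Ioi] with r hr
    exact mul_nonneg (primW_nonneg hw_pos hw (stepDistr_mem ha.le hb.le hc.le habc _ r))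
      (Real.rpow_nonneg (le_of_lt hr) _)
  have hL : (∫⁻ t in Ioo (0:ℝ) 1, ENNReal.ofReal (decRearr f t ^ q * w t))
      = ENNReal.ofReal (q * stepNorm w q a b c (|x|, |y|, |z|)) := by
    rw [lorentz_layer_cake hq0 hw_pos hw hfm, ENNReal.ofReal_mul hq0.le, stepNorm,
      ofReal_integral_eq_lintegral_ofReal hI hnn]
    congr 1
    refine setLIntegral_congr_fun measurableSet_Ioi fun r hr => ?_
    rw [hf, distr_stepFn ha hb hc habc x y z (le_of_lt hr), ENNReal.ofReal_mul]
    exact primW_nonneg hw_pos hw (stepDistr_mem ha.le hb.le hc.le habc _ r)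
  refine ⟨hfm, hL ▸ ENNReal.ofReal_lt_top, ?_⟩
  rw [integral_lorentz_eq_toReal hw_pos hw hfm, hL, ENNReal.toReal_ofReal]
  exact mul_nonneg hq0.le (integral_nonneg_of_ae hnn)

end weight

/-! ### Negative definiteness of the norm on step functions -/

/-- The sum of `|X ± Y ± Z|^q` over the four choices of signs. -/
noncomputable def signSum (q X Y Z : ℝ) : ℝ :=
  |X + Y + Z| ^ q + |X + Y - Z| ^ q + |X - Y + Z| ^ q + |X - Y - Z| ^ q

lemma signSum_neg₃ (q X Y Z : ℝ) : signSum q X Y (-Z) = signSum q X Y Z := by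
  simp only [signSum, sub_neg_eq_add, ← sub_eq_add_neg]; ring

lemma signSum_neg₂ (q X Y Z : ℝ) : signSum q X (-Y) Z = signSum q X Y Z := by
  simp only [signSum, sub_neg_eq_add, ← sub_eq_add_neg]; ring

lemma signSum_neg₁ (q X Y Z : ℝ) : signSum q (-X) Y Z = signSum q X Y Z := by
  simp only [signSum]
  rw [← abs_neg (-X + Y + Z), ← abs_neg (-X + Y - Z), ← abs_neg (-X - Y + Z),
    ← abs_neg (-X - Y - Z), show -(-X + Y + Z) = X - Y - Z by ring,
    show -(-X + Y - Z) = X - Y + Z by ring, show -(-X - Y + Z) = X + Y - Z by ring,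
    show -(-X - Y - Z) = X + Y + Z by ring]
  ring

lemma signSum_abs (q x y z t₁ t₂ t₃ : ℝ) :
    signSum q (x * |t₁|) (y * |t₂|) (z * |t₃|) = signSum q (x * t₁) (y * t₂) (z * t₃) := by
  rcases abs_choice t₁ with h1 | h1 <;> rcases abs_choice t₂ with h2 | h2 <;>
    rcases abs_choice t₃ with h3 | h3 <;>
    simp only [h1, h2, h3, mul_neg, signSum_neg₁, signSum_neg₂, signSum_neg₃]

/-- The Lévy-type integrand representing `signSum`. -/
noncomputable def cosKernel (q x y z p₁ p₂ p₃ s : ℝ) : ℝ :=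
  (1 - Real.cos (s * p₁ * x) * (Real.cos (s * p₂ * y) * Real.cos (s * p₃ * z))) * s ^ (-1 - q)

lemma cosKernel_eq (q x y z p₁ p₂ p₃ s : ℝ) : cosKernel q x y z p₁ p₂ p₃ s =
    1 / 4 * ((1 - Real.cos ((x * p₁ + y * p₂ + z * p₃) * s)) * s ^ (-1 - q)
      + (1 - Real.cos ((x * p₁ + y * p₂ - z * p₃) * s)) * s ^ (-1 - q)
      + (1 - Real.cos ((x * p₁ - y * p₂ + z * p₃) * s)) * s ^ (-1 - q)
      + (1 - Real.cos ((x * p₁ - y * p₂ - z * p₃) * s)) * s ^ (-1 - q)) := by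
  set A := s * p₁ * x with hA
  set B := s * p₂ * y with hB
  set C := s * p₃ * z with hC
  rw [show (x * p₁ + y * p₂ + z * p₃) * s = A + B + C by rw [hA, hB, hC]; ring,
    show (x * p₁ + y * p₂ - z * p₃) * s = A + B - C by rw [hA, hB, hC]; ring,
    show (x * p₁ - y * p₂ + z * p₃) * s = A - B + C by rw [hA, hB, hC]; ring,
    show (x * p₁ - y * p₂ - z * p₃) * s = A - B - C by rw [hA, hB, hC]; ring, cosKernel,
    ← hA, ← hB, ← hC, Real.cos_add (A + B), Real.cos_sub (A + B), Real.cos_add (A - B),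
    Real.cos_sub (A - B), Real.cos_add, Real.cos_sub]
  ring

lemma cosKernel_nonneg (q x y z p₁ p₂ p₃ : ℝ) {s : ℝ} (hs : 0 < s) :
    0 ≤ cosKernel q x y z p₁ p₂ p₃ s := by
  rw [cosKernel_eq]
  have h : ∀ v : ℝ, 0 ≤ (1 - Real.cos v) * s ^ (-1 - q) := fun v =>
    mul_nonneg (sub_nonneg.2 (Real.cos_le_one v)) (Real.rpow_nonneg hs.le _)
  have := h ((x * p₁ + y * p₂ + z * p₃) * s)
  have := h ((x * p₁ + y * p₂ - z * p₃) * s)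
  have := h ((x * p₁ - y * p₂ + z * p₃) * s)
  have := h ((x * p₁ - y * p₂ - z * p₃) * s)
  positivity

lemma cosKernel_integral {q : ℝ} (hq0 : 0 < q) (hq1 : q ≤ 1) (x y z p₁ p₂ p₃ : ℝ) :
    Integrable (cosKernel q x y z p₁ p₂ p₃) halfLine ∧
    ∫ s, cosKernel q x y z p₁ p₂ p₃ s ∂halfLine
      = cosConst q / 4 * signSum q (x * p₁) (y * p₂) (z * p₃) := by
  have hI := fun v => integrableOn_one_sub_cos hq0 hq1 v
  have h1 := hI (x * p₁ + y * p₂ + z * p₃)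
  have h2 := hI (x * p₁ + y * p₂ - z * p₃)
  have h3 := hI (x * p₁ - y * p₂ + z * p₃)
  have h4 := hI (x * p₁ - y * p₂ - z * p₃)
  have he : cosKernel q x y z p₁ p₂ p₃ = _ := funext fun s => cosKernel_eq q x y z p₁ p₂ p₃ s
  rw [he]
  refine ⟨(((h1.add h2).add h3).add h4).const_mul _, ?_⟩
  rw [integral_const_mul, halfLine]
  have := integral_add' ((h1.add h2).add h3) h4
  rw [integral_add' (h1.add h2) h3, integral_add' h1 h2] at this
  refine (congrArg (1 / 4 * ·) this).trans ?_
  simp only [integral_one_sub_cos hq0, signSum]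
  ring

lemma integrable_of_integral_pos {Ω : Type*} [MeasurableSpace Ω] {μ : Measure Ω} {f : Ω → ℝ}
    (h : 0 < ∫ ω, f ω ∂μ) : Integrable f μ := by
  by_contra hf
  rw [integral_undef hf] at h
  exact lt_irrefl _ h

lemma exists_measurable_abs {Ω : Type*} [MeasurableSpace Ω] {μ : Measure Ω} {q : ℝ} (hq0 : 0 < q)
    {t : Ω → ℝ} (h : Integrable (fun ω => |t ω| ^ q) μ) :
    ∃ p : Ω → ℝ, Measurable p ∧ (∀ ω, 0 ≤ p ω) ∧ ∀ᵐ ω ∂μ, p ω = |t ω| := by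
  have h1 : AEMeasurable (fun ω => (|t ω| ^ q) ^ q⁻¹) μ := h.aemeasurable.pow_const _
  refine ⟨fun ω => |h1.mk _ ω|, continuous_abs.measurable.comp h1.measurable_mk,
    fun ω => abs_nonneg _, ?_⟩
  filter_upwards [h1.ae_eq_mk] with ω hω
  rw [← hω, Real.rpow_rpow_inv (abs_nonneg _) hq0.ne', abs_abs]

/-- If `(x, y, z) ↦ x t₁ + y t₂ + z t₃` realizes a sign-invariant norm in `L_q`, averaging over signs
expresses that norm through `signSum` with nonnegative measurable
functions on a `σ`-finite space. No measurability of the `tᵢ` themselves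
is available: only `|x t₁ + y t₂ + z t₃|^q` is known to be integrable. -/
lemma exists_sigmaFinite_model {Ω : Type*} [MeasurableSpace Ω] {μ : Measure Ω} {q : ℝ}
    (hq0 : 0 < q) {t₁ t₂ t₃ : Ω → ℝ} {N : ℝ × ℝ × ℝ → ℝ}
    (hN : ∀ x y z : ℝ, ∫ ω, |x * t₁ ω + y * t₂ ω + z * t₃ ω| ^ q ∂μ = N (|x|, |y|, |z|))
    (hNpos : ∀ x y z : ℝ, x ≠ 0 ∨ y ≠ 0 ∨ z ≠ 0 → 0 < N (|x|, |y|, |z|)) :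
    ∃ (μ' : Measure Ω) (p₁ p₂ p₃ : Ω → ℝ), SigmaFinite μ' ∧ Measurable p₁ ∧ Measurable p₂ ∧
      Measurable p₃ ∧ (∀ ω, 0 ≤ p₁ ω) ∧ (∀ ω, 0 ≤ p₂ ω) ∧ (∀ ω, 0 ≤ p₃ ω) ∧
      ∀ x y z : ℝ, 0 < x → 0 < y → 0 < z →
        Integrable (fun ω => signSum q (x * p₁ ω) (y * p₂ ω) (z * p₃ ω)) μ' ∧
        ∫ ω, signSum q (x * p₁ ω) (y * p₂ ω) (z * p₃ ω) ∂μ' = 4 * N (x, y, z) := by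
  have hInt : ∀ x y z : ℝ, x ≠ 0 ∨ y ≠ 0 ∨ z ≠ 0 →
      Integrable (fun ω => |x * t₁ ω + y * t₂ ω + z * t₃ ω| ^ q) μ := fun x y z h =>
    integrable_of_integral_pos (by rw [hN]; exact hNpos x y z h)
  have i1 : Integrable (fun ω => |t₁ ω| ^ q) μ := by simpa using hInt 1 0 0 (by simp)
  have i2 : Integrable (fun ω => |t₂ ω| ^ q) μ := by simpa using hInt 0 1 0 (by simp)
  have i3 : Integrable (fun ω => |t₃ ω| ^ q) μ := by simpa using hInt 0 0 1 (by simp)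
  obtain ⟨p₁, m1, n1, e1⟩ := exists_measurable_abs hq0 i1
  obtain ⟨p₂, m2, n2, e2⟩ := exists_measurable_abs hq0 i2
  obtain ⟨p₃, m3, n3, e3⟩ := exists_measurable_abs hq0 i3
  have hh := ((i1.add i2).add i3).aefinStronglyMeasurable
  have hS := hh.measurableSet
  refine ⟨μ.restrict hh.sigmaFiniteSet, p₁, p₂, p₃, inferInstance, m1, m2, m3, n1, n2, n3, ?_⟩
  intro x y z hx hy hz
  have j1 := hInt x y z (Or.inl hx.ne')
  have j2 := hInt x y (-z) (Or.inl hx.ne')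
  have j3 := hInt x (-y) z (Or.inl hx.ne')
  have j4 := hInt x (-y) (-z) (Or.inl hx.ne')
  have hae : ∀ᵐ ω ∂μ, |x * t₁ ω + y * t₂ ω + z * t₃ ω| ^ q
      + |x * t₁ ω + y * t₂ ω + (-z) * t₃ ω| ^ q
      + |x * t₁ ω + (-y) * t₂ ω + z * t₃ ω| ^ q
      + |x * t₁ ω + (-y) * t₂ ω + (-z) * t₃ ω| ^ q
      = signSum q (x * p₁ ω) (y * p₂ ω) (z * p₃ ω) := by
    filter_upwards [e1, e2, e3] with ω h1 h2 h3
    rw [h1, h2, h3, signSum_abs, signSum]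
    simp only [neg_mul, ← sub_eq_add_neg]
  have hG : Integrable (fun ω => signSum q (x * p₁ ω) (y * p₂ ω) (z * p₃ ω)) μ :=
    (((j1.add j2).add j3).add j4).congr hae
  refine ⟨hG.restrict, ?_⟩
  have hzero : ∫ ω in hh.sigmaFiniteSetᶜ, signSum q (x * p₁ ω) (y * p₂ ω) (z * p₃ ω) ∂μ = 0 := by
    refine integral_eq_zero_of_ae ?_
    filter_upwards [hh.ae_eq_zero_compl, ae_restrict_of_ae e1, ae_restrict_of_ae e2,
      ae_restrict_of_ae e3] with ω h0 h1 h2 h3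
    have a1 := Real.rpow_nonneg (abs_nonneg (t₁ ω)) q
    have a2 := Real.rpow_nonneg (abs_nonneg (t₂ ω)) q
    have a3 := Real.rpow_nonneg (abs_nonneg (t₃ ω)) q
    have h0' : |t₁ ω| ^ q + |t₂ ω| ^ q + |t₃ ω| ^ q = 0 := h0
    have b : ∀ u : ℝ, |u| ^ q = 0 → |u| = 0 := fun u hu =>
      (Real.rpow_eq_zero (abs_nonneg u) hq0.ne').1 hu
    rw [h1, h2, h3, b _ (by linarith), b (t₂ ω) (by linarith), b (t₃ ω) (by linarith)]
    simp [signSum, Real.zero_rpow hq0.ne']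
  have hsum := integral_add_compl hS hG
  rw [hzero, add_zero] at hsum
  rw [hsum, ← integral_congr_ae hae]
  have := integral_add' ((j1.add j2).add j3) j4
  rw [integral_add' (j1.add j2) j3, integral_add' j1 j2, hN, hN, hN, hN] at this
  refine this.trans ?_
  simp only [abs_neg, abs_of_pos hx, abs_of_pos hy, abs_of_pos hz]
  ring

/-- A function on the octant coming from an `L_q`-embedding is tested nonpositively by the
profiles: it is a superposition of functions `1 - cos cos cos`. -/
lemma integral_prof3_nonpos {Ω : Type*} [MeasurableSpace Ω] {μ : Measure Ω} {q : ℝ}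
    (hq0 : 0 < q) (hq1 : q ≤ 1) {t₁ t₂ t₃ : Ω → ℝ} {N : ℝ × ℝ × ℝ → ℝ} {C : ℝ}
    (hN : ∀ x y z : ℝ, ∫ ω, |x * t₁ ω + y * t₂ ω + z * t₃ ω| ^ q ∂μ = N (|x|, |y|, |z|))
    (hNpos : ∀ x y z : ℝ, x ≠ 0 ∨ y ≠ 0 ∨ z ≠ 0 → 0 < N (|x|, |y|, |z|))
    (hNle : ∀ v : ℝ × ℝ × ℝ, 0 < v.1 → 0 < v.2.1 → 0 < v.2.2 → N v ≤ C * majorant v)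
    {α β γ : ℝ} (hα : 0 ≤ α) (hβ : 0 ≤ β) (hγ : 0 ≤ γ) :
    ∫ v, prof3 α β γ v * N v ∂octant ≤ 0 := by
  obtain ⟨μ', p₁, p₂, p₃, hσ, m1, m2, m3, n1, n2, n3, hp⟩ := exists_sigmaFinite_model hq0 hN hNpos
  have hc := cosConst_pos hq0 hq1
  set g : (ℝ × ℝ × ℝ) × (Ω × ℝ) → ℝ := fun X =>
    cosKernel q X.1.1 X.1.2.1 X.1.2.2 (p₁ X.2.1) (p₂ X.2.1) (p₃ X.2.1) X.2.2 with hg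
  have hgm : Measurable g := by
    simp only [hg, cosKernel]
    fun_prop
  have hsup := integral_prof3_superposition (μ'.prod halfLine) hgm
    (N := fun v => cosConst q * N v) (C := cosConst q * C) α β γ ?_
  · have hle : ∫ v, prof3 α β γ v * (cosConst q * N v) ∂octant ≤ 0 := by
      rw [hsup]
      refine integral_nonpos_of_ae ?_
      have h : ∀ᵐ X ∂μ'.prod halfLine, (0:ℝ) < X.2 :=
        Measure.quasiMeasurePreserving_snd.ae (ae_restrict_mem measurableSet_Ioi)
      filter_upwards [h] with X hX
      have h1 := integral_prof3_one_sub_cos_nonpos hα hβ hγ (mul_nonneg hX.le (n1 X.1))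
        (mul_nonneg hX.le (n2 X.1)) (mul_nonneg hX.le (n3 X.1))
      have h2 := mul_nonpos_of_nonpos_of_nonneg h1 (Real.rpow_nonneg hX.le (-1 - q))
      rw [← integral_mul_const] at h2
      refine le_trans (le_of_eq ?_) h2
      refine integral_congr_ae (Filter.Eventually.of_forall fun v => ?_)
      simp only [hg, cosKernel]
      ring
    have e : ∫ v, prof3 α β γ v * (cosConst q * N v) ∂octant
        = cosConst q * ∫ v, prof3 α β γ v * N v ∂octant := by
      rw [← integral_const_mul]
      refine integral_congr_ae (Filter.Eventually.of_forall fun v => ?_)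
      simp only; ring
    rw [e] at hle
    exact nonpos_of_mul_nonpos_right hle hc
  · intro v h1 h2 h3
    obtain ⟨hi, hv⟩ := hp v.1 v.2.1 v.2.2 h1 h2 h3
    have hnn : ∀ᵐ X ∂μ'.prod halfLine, 0 ≤ g (v, X) := by
      have h : ∀ᵐ X ∂μ'.prod halfLine, (0:ℝ) < X.2 :=
        Measure.quasiMeasurePreserving_snd.ae (ae_restrict_mem measurableSet_Ioi)
      filter_upwards [h] with X hX using cosKernel_nonneg _ _ _ _ _ _ _ hX
    have hck := fun ω => cosKernel_integral hq0 hq1 v.1 v.2.1 v.2.2 (p₁ ω) (p₂ ω) (p₃ ω)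
    have hgi : Integrable (fun X => g (v, X)) (μ'.prod halfLine) := by
      have hmv : Measurable fun X => g (v, X) := hgm.comp measurable_prodMk_left
      rw [integrable_prod_iff hmv.aestronglyMeasurable]
      refine ⟨Filter.Eventually.of_forall fun ω => (hck ω).1, ?_⟩
      refine (hi.const_mul (cosConst q / 4)).congr (Filter.Eventually.of_forall fun ω => ?_)
      refine (hck ω).2.symm.trans ?_
      refine integral_congr_ae ?_
      filter_upwards [ae_restrict_mem measurableSet_Ioi] with s hs
      exact (Real.norm_of_nonneg (cosKernel_nonneg _ _ _ _ _ _ _ hs)).symm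
    refine ⟨hnn, hgi, ?_, ?_⟩
    · rw [integral_prod _ hgi]
      refine (integral_congr_ae (Filter.Eventually.of_forall fun ω => (hck ω).2)).trans ?_
      rw [integral_const_mul, hv]
      ring
    · rw [mul_assoc]
      exact mul_le_mul_of_nonneg_left (hNle v h1 h2 h3) hc.le

/-! ### The functional equation for the primitive of the weight -/

/-- An `L_q`-embedding forces all third differences of `W` to vanish: tested against the profiles,
the norm equals `-q` times the third difference times the cubic interaction, and must have
constant sign although the interaction takes both signs. -/
lemma thirdDiff_eq_zero {w : ℝ → ℝ} (hw_pos : ∀ t ∈ Ioo (0:ℝ) 1, 0 < w t)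
    (hw : IntegrableOn w (Ioo (0:ℝ) 1)) (hw1 : (∫ t in Ioo (0:ℝ) 1, w t) = 1)
    {q a b c : ℝ} (hq0 : 0 < q) (hq1 : q ≤ 1)
    (ha : 0 < a) (hb : 0 < b) (hc : 0 < c) (habc : a + (b + c) ≤ 1)
    {Ω : Type*} [MeasurableSpace Ω] {μ : Measure Ω} (T : (ℝ → ℝ) →ₗ[ℝ] (Ω → ℝ))
    (hT : ∀ f : ℝ → ℝ, Measurable f →
        (∫⁻ t in Ioo (0:ℝ) 1, ENNReal.ofReal (decRearr f t ^ q * w t)) < ⊤ →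
        (∫ ω, |T f ω| ^ q ∂μ) = ∫ t in Ioo (0:ℝ) 1, decRearr f t ^ q * w t) :
    thirdDiff (primW w) a b c = 0 := by
  set N : ℝ × ℝ × ℝ → ℝ := fun v => q * stepNorm w q a b c v with hNdef
  have hN : ∀ x y z : ℝ, ∫ ω, |x * T ((Ioo 0 a).indicator 1) ω
      + y * T ((Ioo a (a + b)).indicator 1) ω
      + z * T ((Ioo (a + b) (a + (b + c))).indicator 1) ω| ^ q ∂μ = N (|x|, |y|, |z|) := by
    intro x y z
    obtain ⟨h1, h2, h3⟩ := lorentz_stepFn hw_pos hw hw1 hq0 ha hb hc habc x y z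
    have h4 := (hT _ h1 h2).trans h3
    simpa only [stepFn, map_add, map_smul, Pi.add_apply, Pi.smul_apply, smul_eq_mul] using h4
  have hNpos : ∀ x y z : ℝ, x ≠ 0 ∨ y ≠ 0 ∨ z ≠ 0 → 0 < N (|x|, |y|, |z|) := fun x y z h =>
    mul_pos hq0 (stepNorm_pos hw_pos hw hw1 hq0 ha hb hc habc (abs_nonneg x) (abs_nonneg y)
      (abs_nonneg z) (by simpa only [abs_pos] using h))
  have hNle : ∀ v : ℝ × ℝ × ℝ, 0 < v.1 → 0 < v.2.1 → 0 < v.2.2 → N v ≤ 1 * majorant v := by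
    intro v h1 h2 h3
    have h := mul_le_mul_of_nonneg_left
      (stepNorm_le_majorant hw_pos hw hw1 hq0 hq1 ha hb hc habc h1.le h2.le h3.le) hq0.le
    rwa [← mul_assoc, mul_inv_cancel₀ hq0.ne'] at h
  have hWm : Measurable fun p : (ℝ × ℝ × ℝ) × ℝ => primW w (stepDistr a b c p.1 p.2) :=
    primW_comp_measurable hw_pos hw (stepDistr_measurable a b c)
      fun p => stepDistr_mem ha.le hb.le hc.le habc p.1 p.2
  -- the test integral is nonpositive and equals `-q` times this product
  have key : ∀ α β γ : ℝ, 0 ≤ α → 0 ≤ β → 0 ≤ γ →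
      0 ≤ thirdDiff (primW w) a b c * triple q α β γ := by
    intro α β γ hα hβ hγ
    have h1 := integral_prof3_nonpos hq0 hq1 hN hNpos hNle hα hβ hγ
    have h2 := integral_prof3_superposition halfLine
      (g := fun p => q * (primW w (stepDistr a b c p.1 p.2) * p.2 ^ (q - 1)))
      (measurable_const.mul (hWm.mul (measurable_snd.pow_const _))) (N := N) (C := 1) α β γ ?_
    · have h3 : ∫ r, ∫ v, prof3 α β γ v * (q * (primW w (stepDistr a b c v r) * r ^ (q - 1)))
          ∂octant ∂halfLine = -(q * thirdDiff (primW w) a b c) * triple q α β γ := by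
        rw [triple, ← integral_const_mul]
        refine setIntegral_congr_fun measurableSet_Ioi fun r hr => ?_
        have h4 := integral_prof3_stepDistr α β γ a b c (le_of_lt hr) (W := primW w)
          (hWm.comp measurable_prodMk_right)
          ⟨1, fun v => by
            have hm := stepDistr_mem ha.le hb.le hc.le habc v r
            rw [Real.norm_of_nonneg (primW_nonneg hw_pos hw hm)]
            exact primW_le_one hw_pos hw hw1 hm⟩
        have h5 : ∫ v, prof3 α β γ v * (q * (primW w (stepDistr a b c v r) * r ^ (q - 1))) ∂octant
            = q * r ^ (q - 1) * ∫ v, prof3 α β γ v * primW w (stepDistr a b c v r) ∂octant := by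
          rw [← integral_const_mul]
          refine integral_congr_ae (Filter.Eventually.of_forall fun v => ?_)
          simp only; ring
        rw [h5, h4]
        ring
      rw [h2, h3] at h1
      have h6 : 0 ≤ q * (thirdDiff (primW w) a b c * triple q α β γ) := by linarith
      exact nonneg_of_mul_nonneg_right h6 hq0
    · intro v p1 p2 p3
      refine ⟨?_, ?_, ?_, hNle v p1 p2 p3⟩
      · filter_upwards [ae_restrict_mem measurableSet_Ioi] with r hr
        exact mul_nonneg hq0.le (mul_nonneg
          (primW_nonneg hw_pos hw (stepDistr_mem ha.le hb.le hc.le habc v r))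
          (Real.rpow_nonneg (le_of_lt hr) _))
      · exact (integrable_stepNorm hw_pos hw hw1 hq0 ha hb hc habc p1.le p2.le p3.le).const_mul q
      · rw [integral_const_mul]; rfl
  obtain ⟨K, hK, hneg, hpos⟩ := exists_triple_signs hq0 hq1
  have k1 := key K K (2 * K + 1) (by linarith) (by linarith) (by linarith)
  have k2 := key K K (2 * K + -1) (by linarith) (by linarith) (by linarith)
  nlinarith

/-- A sequence with vanishing third differences which vanishes at `0`, `m` and `2m` is zero. -/
lemma seq_eq_zero {u : ℕ → ℝ} {m : ℕ} (hm : 1 ≤ m) (h0 : u 0 = 0) (hmid : u m = 0)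
    (hend : u (2 * m) = 0)
    (hrec : ∀ k, 1 ≤ k → k + 2 ≤ 2 * m → u (k + 2) - 2 * u (k + 1) - u 2 + u k + 2 * u 1 = 0) :
    ∀ k ≤ 2 * m, u k = 0 := by
  have hform : ∀ k : ℕ, k + 1 ≤ 2 * m → u k = k * u 1 + k * (k - 1) / 2 * (u 2 - 2 * u 1) ∧
      u (k + 1) = (k + 1) * u 1 + (k + 1) * k / 2 * (u 2 - 2 * u 1) := by
    intro k
    induction k with
    | zero => intro _; simp [h0]
    | succ k ih =>
      intro hk
      obtain ⟨i1, i2⟩ := ih (by omega)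
      refine ⟨by push_cast; rw [i2]; ring, ?_⟩
      rcases Nat.eq_zero_or_pos k with rfl | hk0
      · push_cast; ring_nf
      · have := hrec k hk0 (by omega)
        have e : u (k + 1 + 1) = 2 * u (k + 1) + u 2 - u k - 2 * u 1 := by
          rw [show k + 1 + 1 = k + 2 by ring]; linarith
        rw [e, i1, i2]; push_cast; ring
  have e1 := (hform m (by omega)).1
  have e2 := (hform (2 * m - 1) (by omega)).2
  have hm' : ((2 * m - 1 : ℕ) : ℝ) = 2 * m - 1 := by
    rw [Nat.cast_sub (by omega)]; push_cast; ring
  rw [show 2 * m - 1 + 1 = 2 * m by omega, hend, hm'] at e2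
  rw [hmid] at e1
  have hmpos : (0:ℝ) < m := by exact_mod_cast hm
  have hd : u 2 - 2 * u 1 = 0 := by
    have : (m:ℝ) ^ 2 * (u 2 - 2 * u 1) = 0 := by linear_combination 2 * e1 - e2
    exact (mul_eq_zero.1 this).resolve_left (by positivity)
  have h1 : u 1 = 0 := by
    rw [hd, mul_zero, add_zero] at e1
    exact (mul_eq_zero.1 e1.symm).resolve_left hmpos.ne'
  intro k hk
  rcases Nat.lt_or_ge k (2 * m) with h | h
  · rw [(hform k h).1, hd, h1]; simp
  · rw [le_antisymm hk h, hend]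

/-- A continuous function on `[0,1]` with vanishing third differences is a quadratic polynomial.
The quadratic `Q` interpolating `W` at `0, 1/2, 1` agrees with `W` on every grid `k/2m`. -/
lemma quadratic_of_thirdDiff {W : ℝ → ℝ} (hW : ContinuousOn W (Icc 0 1)) (h0 : W 0 = 0)
    (h1 : W 1 = 1)
    (h3 : ∀ a b c : ℝ, 0 < a → 0 < b → 0 < c → a + (b + c) ≤ 1 → thirdDiff W a b c = 0) :
    ∀ x ∈ Icc (0:ℝ) 1, W x = x + 4 * (W (1 / 2) - 1 / 2) * (x * (1 - x)) := by
  set β := 4 * (W (1 / 2) - 1 / 2) with hβ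
  set V : ℝ → ℝ := fun x => W x - (x + β * (x * (1 - x))) with hV
  have hVc : ContinuousOn V (Icc 0 1) := hW.sub (by fun_prop)
  have hV3 : ∀ a b c : ℝ, 0 < a → 0 < b → 0 < c → a + (b + c) ≤ 1 → thirdDiff V a b c = 0 := by
    intro a b c ha hb hc h
    have := h3 a b c ha hb hc h
    simp only [thirdDiff, hV] at this ⊢
    linear_combination this
  have hrat : ∀ m : ℕ, 1 ≤ m → ∀ k ≤ 2 * m, V (k / (2 * m)) = 0 := by
    intro m hm
    have hmpos : (0:ℝ) < m := by exact_mod_cast hm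
    refine seq_eq_zero (u := fun k : ℕ => V (k / (2 * m))) hm ?_ ?_ ?_ ?_
    · simp [hV, h0]
    · rw [show (m:ℝ) / (2 * m) = 1 / 2 by field_simp]
      simp only [hV, hβ]; ring
    · push_cast
      rw [div_self (by positivity)]
      simp [hV, h1]
    · intro k hk hk2
      have hkpos : (0:ℝ) < k := by exact_mod_cast hk
      have hk2' : (k:ℝ) + 2 ≤ 2 * m := by exact_mod_cast hk2
      have hs : (k:ℝ) / (2 * m) + (1 / (2 * m) + 1 / (2 * m)) = (k + 2) / (2 * m) := by
        field_simp; ring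
      have h := hV3 (k / (2 * m)) (1 / (2 * m)) (1 / (2 * m)) (by positivity) (by positivity)
        (by positivity) (by rw [hs, div_le_one (by positivity)]; exact hk2')
      have hV0 : V 0 = 0 := by simp [hV, h0]
      rw [thirdDiff, hs, hV0, ← add_div, ← add_div, one_add_one_eq_two] at h
      push_cast
      linarith
  intro x hx
  have hlim : Filter.Tendsto (fun m : ℕ => (⌊x * (2 * ((m + 1 : ℕ) : ℝ))⌋₊ : ℝ)
      / (2 * ((m + 1 : ℕ) : ℝ))) Filter.atTop (nhds x) := by
    have hh : Filter.Tendsto (fun m : ℕ => 2 * ((m + 1 : ℕ) : ℝ)) Filter.atTop Filter.atTop :=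
      (tendsto_natCast_atTop_atTop.comp (Filter.tendsto_add_atTop_nat 1)).const_mul_atTop two_pos
    exact (tendsto_nat_floor_mul_div_atTop hx.1).comp hh
  have hfl : ∀ m : ℕ, ⌊x * (2 * ((m + 1 : ℕ) : ℝ))⌋₊ ≤ 2 * (m + 1) := by
    intro m
    refine Nat.floor_le_of_le ?_
    push_cast
    nlinarith [hx.2, hx.1, (Nat.cast_nonneg m : (0:ℝ) ≤ m)]
  have hmem : ∀ m : ℕ, (⌊x * (2 * ((m + 1 : ℕ) : ℝ))⌋₊ : ℝ) / (2 * ((m + 1 : ℕ) : ℝ))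
      ∈ Icc (0:ℝ) 1 := by
    intro m
    refine ⟨by positivity, ?_⟩
    rw [div_le_one (by positivity)]
    exact_mod_cast hfl m
  have hlim2 : Filter.Tendsto (fun m : ℕ => V ((⌊x * (2 * ((m + 1 : ℕ) : ℝ))⌋₊ : ℝ)
      / (2 * ((m + 1 : ℕ) : ℝ)))) Filter.atTop (nhds (V x)) :=
    (hVc x hx).tendsto.comp (tendsto_nhdsWithin_iff.2
      ⟨hlim, Filter.Eventually.of_forall hmem⟩)
  have hz : (fun m : ℕ => V ((⌊x * (2 * ((m + 1 : ℕ) : ℝ))⌋₊ : ℝ)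
      / (2 * ((m + 1 : ℕ) : ℝ)))) = fun _ => 0 :=
    funext fun m => hrat (m + 1) (by omega) _ (hfl m)
  rw [hz] at hlim2
  have hVx : V x = 0 := tendsto_nhds_unique hlim2 tendsto_const_nhds
  simp only [hV] at hVx
  linarith

lemma primW_eq_intervalIntegral {w : ℝ → ℝ} {d : ℝ} (hd : 0 ≤ d) :
    primW w d = ∫ t in (0:ℝ)..d, w t := by
  rw [primW, intervalIntegral.integral_of_le hd, integral_Ioc_eq_integral_Ioo]

/-- For a non-increasing weight, a quadratic primitive determines the weight at every point. -/
lemma weight_eq_of_primW {w : ℝ → ℝ} (hw : IntegrableOn w (Ioo (0:ℝ) 1))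
    (hw_anti : ∀ s t, s ∈ Ioo (0:ℝ) 1 → t ∈ Ioo (0:ℝ) 1 → s ≤ t → w t ≤ w s) {β : ℝ}
    (hW : ∀ x ∈ Icc (0:ℝ) 1, primW w x = x + β * (x * (1 - x))) :
    ∀ t ∈ Ioo (0:ℝ) 1, w t = 1 + β - 2 * β * t := by
  have hmean : ∀ s t, 0 < s → s < t → t < 1 →
      w t ≤ 1 + β - β * (s + t) ∧ 1 + β - β * (s + t) ≤ w s := by
    intro s t hs hst ht
    have hI : ∀ l u, 0 ≤ l → l ≤ u → u < 1 → IntervalIntegrable w volume l u := by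
      intro l u hl hlu hu
      rw [intervalIntegrable_iff_integrableOn_Ioo_of_le hlu]
      exact hw.mono_set (Ioo_subset_Ioo hl hu.le)
    have e : ∫ x in s..t, w x = (t - s) * (1 + β - β * (s + t)) := by
      have := intervalIntegral.integral_interval_sub_left
        (hI 0 t le_rfl (hs.trans hst).le ht) (hI 0 s le_rfl hs.le (hst.trans ht))
      rw [← this, ← primW_eq_intervalIntegral hs.le, ← primW_eq_intervalIntegral (hs.trans hst).le,
        hW t ⟨(hs.trans hst).le, ht.le⟩, hW s ⟨hs.le, (hst.trans ht).le⟩]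
      ring
    have hl : (t - s) * w t ≤ ∫ x in s..t, w x := by
      rw [← smul_eq_mul, ← intervalIntegral.integral_const]
      refine intervalIntegral.integral_mono_on hst.le (by simp) (hI s t hs.le hst.le ht) ?_
      exact fun x hx => hw_anti x t ⟨hs.trans_le hx.1, hx.2.trans_lt ht⟩ ⟨hs.trans hst, ht⟩ hx.2
    have hu : ∫ x in s..t, w x ≤ (t - s) * w s := by
      rw [← smul_eq_mul, ← intervalIntegral.integral_const]
      refine intervalIntegral.integral_mono_on hst.le (hI s t hs.le hst.le ht) (by simp) ?_
      exact fun x hx => hw_anti s x ⟨hs, hst.trans ht⟩ ⟨hs.trans_le hx.1, hx.2.trans_lt ht⟩ hx.1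
    rw [e] at hl hu
    exact ⟨le_of_mul_le_mul_left hl (sub_pos.2 hst), le_of_mul_le_mul_left hu (sub_pos.2 hst)⟩
  intro t ht
  have hc : Filter.Tendsto (fun s => 1 + β - β * (s + t)) (nhds t)
      (nhds (1 + β - β * (t + t))) := Continuous.tendsto (by fun_prop) t
  rw [show 1 + β - 2 * β * t = 1 + β - β * (t + t) by ring]
  refine le_antisymm ?_ ?_
  · refine ge_of_tendsto (hc.mono_left (nhdsWithin_le_nhds (s := Iio t))) ?_
    filter_upwards [Ioo_mem_nhdsLT ht.1] with s hs
    exact (hmean s t hs.1 hs.2 ht.2).1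
  · refine le_of_tendsto (hc.mono_left (nhdsWithin_le_nhds (s := Ioi t))) ?_
    filter_upwards [Ioo_mem_nhdsGT ht.2] with s hs
    rw [add_comm s t]
    exact (hmean t s ht.1 hs.1 hs.2).2

lemma linear_of_embeds {q : ℝ} (hq0 : 0 < q) (hq1 : q ≤ 1) {w : ℝ → ℝ}
    (hw_pos : ∀ t ∈ Ioo (0:ℝ) 1, 0 < w t)
    (hw_anti : ∀ s t, s ∈ Ioo (0:ℝ) 1 → t ∈ Ioo (0:ℝ) 1 → s ≤ t → w t ≤ w s)
    (hw : IntegrableOn w (Ioo (0:ℝ) 1)) (hw1 : (∫ t in Ioo (0:ℝ) 1, w t) = 1)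
    {Ω : Type*} [MeasurableSpace Ω] {μ : Measure Ω} (T : (ℝ → ℝ) →ₗ[ℝ] (Ω → ℝ))
    (hT : ∀ f : ℝ → ℝ, Measurable f →
        (∫⁻ t in Ioo (0:ℝ) 1, ENNReal.ofReal (decRearr f t ^ q * w t)) < ⊤ →
        (∫ ω, |T f ω| ^ q ∂μ) = ∫ t in Ioo (0:ℝ) 1, decRearr f t ^ q * w t) :
    ∃ α ∈ Icc (0:ℝ) 2, ∀ t ∈ Ioo (0:ℝ) 1, w t = 1 + α / 2 - α * t := by
  have hcont : ContinuousOn (primW w) (Icc 0 1) := by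
    have h := intervalIntegral.continuousOn_primitive_Icc
      ((integrableOn_Icc_iff_integrableOn_Ioo (by finiteness) (by finiteness)).2 hw)
    refine h.congr fun x _ => ?_
    exact (integral_Icc_eq_integral_Ioo (f := w)).symm
  have hW := quadratic_of_thirdDiff hcont primW_zero hw1 fun a b c ha hb hc h =>
    thirdDiff_eq_zero hw_pos hw hw1 hq0 hq1 ha hb hc h T hT
  set β := 4 * (primW w (1 / 2) - 1 / 2)
  have hlin := weight_eq_of_primW hw hw_anti hW
  refine ⟨2 * β, ⟨?_, ?_⟩, fun t ht => by rw [hlin t ht]; ring⟩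
  · have h1 : (1 / 4 : ℝ) ∈ Ioo (0:ℝ) 1 := by constructor <;> norm_num
    have h2 : (3 / 4 : ℝ) ∈ Ioo (0:ℝ) 1 := by constructor <;> norm_num
    have h := hw_anti _ _ h1 h2 (by norm_num)
    rw [hlin _ h1, hlin _ h2] at h
    linarith
  · by_contra hβ
    have hβ1 : 1 < β := by linarith
    -- for `β > 1` the linear weight would vanish inside the interval
    have h1 : (1 + β) / (2 * β) ∈ Ioo (0:ℝ) 1 := by
      refine ⟨by positivity, ?_⟩
      rw [div_lt_one (by linarith)]; linarith
    have h := hw_pos _ h1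
    rw [hlin _ h1, mul_div_cancel₀ _ (by positivity)] at h
    simp at h

/-- For `0 < q ≤ 1` and a positive non-increasing weight `w` on `(0,1)` with
`∫_0^1 w = 1`, the Lorentz function space `L_{w,q}(0,1)` is isometric to a
subspace of `L_q` iff `w(t) = 1 + α/2 − αt` a.e. for some `α ∈ [0,2]`. -/
theorem stmt2 (q : ℝ) (hq0 : 0 < q) (hq1 : q ≤ 1) (w : ℝ → ℝ)
    (hw_pos : ∀ t ∈ Ioo (0:ℝ) 1, 0 < w t)
    (hw_anti : ∀ s t, s ∈ Ioo (0:ℝ) 1 → t ∈ Ioo (0:ℝ) 1 → s ≤ t → w t ≤ w s)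
    (hw_int : (∫ t in Ioo (0:ℝ) 1, w t) = 1) :
    (∃ (Ω : Type) (_ : MeasurableSpace Ω) (μ : Measure Ω)
        (T : (ℝ → ℝ) →ₗ[ℝ] (Ω → ℝ)),
      ∀ f : ℝ → ℝ, Measurable f →
        (∫⁻ t in Ioo (0:ℝ) 1, ENNReal.ofReal (decRearr f t ^ q * w t)) < ⊤ →
        (∫ ω, |T f ω| ^ q ∂μ) = ∫ t in Ioo (0:ℝ) 1, decRearr f t ^ q * w t) ↔
    (∃ α ∈ Icc (0:ℝ) 2, ∀ᵐ t ∂(volume.restrict (Ioo (0:ℝ) 1)),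
        w t = 1 + α / 2 - α * t) := by
  have hw : IntegrableOn w (Ioo (0:ℝ) 1) := integrable_of_integral_pos (by rw [hw_int]; norm_num)
  constructor
  · rintro ⟨Ω, _, μ, T, hT⟩
    obtain ⟨α, hα, h⟩ := linear_of_embeds hq0 hq1 hw_pos hw_anti hw hw_int T hT
    exact ⟨α, hα, (ae_restrict_mem measurableSet_Ioo).mono h⟩
  · rintro ⟨α, hα, h⟩
    exact linear_weight_embeds hq0 hq1 hw_pos hw hα h
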